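/- arXiv:2310.14517 — 2 statements merged into one kernel-verified Lean document; each statement's English description precedes it below -/
import Mathlib

section
/- Let d ≥ 5, T > 0, and let v, f : ℝ × ℝ^d → ℝ be smooth functions such that there is R > 0 with supp v(t, ·) ∪ supp f(t, ·) ⊆ {x : |x| ≤ R} for every t ∈ [0, T]. Suppose v solves the perturbed Hartree nonlinear wave equation ∂²_t v = Δv − 𝒩(v + f) on [0, T] × ℝ^d with v(0, ·) = 0 and ∂_t v(0, ·) = 0, where 𝒩(w)(x) = ( ∫_{ℝ^d} |x − y|^{-4} w(y)² dy ) w(x). Then for every t ∈ [0, T], E(v(t, ·), ∂_t v(t, ·)) = − ∫₀^t ∫_{ℝ^d} ∂_{t'} v(t', x) [ 𝒩(v + f)(t', x) − 𝒩(v)(t', x) ] dx dt'. -/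
/-!
The identity is the integrated form of `E'(t) = ∫ ∂ₜv (∂ₜ²v - Δv + 𝒩(v))`, into which the equation
`∂ₜ²v - Δv = -𝒩(v + f)` is inserted; the energy vanishes at time `0`.

The support of `v(t, ·)` is only controlled for `t ∈ [0, T]`, so `v` is replaced by `W = χ v` with a
spatial cutoff `χ` equal to `1` on the ball of radius `R`. On `[0, T]` the functions `v` and `W` and
their time derivatives agree (`hasDerivAt_eq_of_eqOn_Icc`), and `W` is smooth with support in a
fixed ball at all times. Its energy can be differentiated under the integral sign
(`hasDerivAt_integral_kernel`). The gradient term is integrated by parts (`kinetic_hasDerivAt`).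
The Hartree term is an integral over `ℝ^d × ℝ^d` against `|x - y|^{-4}`, which is integrable on
products of balls because `d ≥ 5` (`integrableOn_kernel`), and its symmetry gives the derivative
`∫ ∂ₜW · 𝒩(W)` (`potential_hasDerivAt`). These derivatives are continuous in time, so the
fundamental theorem of calculus applies.
-/

open MeasureTheory

/-- The energy of the Hartree nonlinear wave equation:
`E(u₀,u₁) = ½ ∫ (u₁² + |∇u₀|²) + ¼ ∬ u₀(x)² u₀(y)² |x-y|^{-4}`. -/
noncomputable def hartreeEnergy (d : ℕ) (u₀ u₁ : EuclideanSpace ℝ (Fin d) → ℝ) : ℝ :=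
  (1 / 2) * (∫ x, ((u₁ x) ^ 2 + ‖fderiv ℝ u₀ x‖ ^ 2)) +
    (1 / 4) * ∫ x, ∫ y, (u₀ x) ^ 2 * (u₀ y) ^ 2 * ‖x - y‖ ^ (-4 : ℝ)

/-- The Euclidean Laplacian as the sum of second partial derivatives along the
standard coordinate directions. -/
noncomputable def euclidLaplacian (d : ℕ) (f : EuclideanSpace ℝ (Fin d) → ℝ)
    (x : EuclideanSpace ℝ (Fin d)) : ℝ :=
  ∑ i : Fin d,
    fderiv ℝ (fun y => fderiv ℝ f y (EuclideanSpace.single i 1)) x (EuclideanSpace.single i 1)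

/-- The Hartree nonlinearity `𝒩(w)(x) = (∫ |x-y|^{-4} w(y)² dy) w(x)`. -/
noncomputable def hartreeNonlinearity (d : ℕ) (w : EuclideanSpace ℝ (Fin d) → ℝ)
    (x : EuclideanSpace ℝ (Fin d)) : ℝ :=
  (∫ y, ‖x - y‖ ^ (-4 : ℝ) * (w y) ^ 2) * w x

open Set Filter Topology

/-! ### Smooth functions with uniformly compact spatial support -/

lemma integrable_mul_kernel {Z : Type*} [NormedAddCommGroup Z] [MeasurableSpace Z]
    [OpensMeasurableSpace Z] {μ : Measure Z} {H k : Z → ℝ} {K : Set Z}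
    (hK : IsCompact K) (hH : Continuous H) (hsupp : ∀ z, z ∉ K → H z = 0) (hk : IntegrableOn k K μ) :
    Integrable (fun z => H z * k z) μ := by
  have h := hk.continuousOn_mul hH.continuousOn hK
  rwa [integrableOn_iff_integrable_of_support_subset] at h
  intro z hz
  by_contra hzK
  exact hz (by simp [hsupp z hzK])

section CompactSupport

variable {Z : Type*} [NormedAddCommGroup Z] [NormedSpace ℝ Z]

lemma fderiv_vanish_off {G : ℝ × Z → ℝ} {K : Set Z} (hK : IsClosed K)
    (hsupp : ∀ p : ℝ × Z, p.2 ∉ K → G p = 0) (e : ℝ × Z) :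
    ∀ p : ℝ × Z, p.2 ∉ K → fderiv ℝ G p e = 0 := by
  intro p hp
  have hev : G =ᶠ[𝓝 p] fun _ => (0 : ℝ) := by
    have : {q : ℝ × Z | q.2 ∉ K} ∈ 𝓝 p :=
      (hK.isOpen_compl.preimage continuous_snd).mem_nhds hp
    filter_upwards [this] with q hq using hsupp q hq
  simp [hev.fderiv_eq]

lemma contDiff_fderiv_dir {V : Type*} [NormedAddCommGroup V] [NormedSpace ℝ V] {G : V → ℝ}
    (hG : ContDiff ℝ (⊤ : ℕ∞) G) (e : V) :
    ContDiff ℝ (⊤ : ℕ∞) (fun p => fderiv ℝ G p e) :=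
  (hG.fderiv_right (m := (⊤ : ℕ∞)) (by norm_cast)).clm_apply contDiff_const

/-- Directional derivatives of a smooth function commute. -/
lemma fderiv_dir_comm {V : Type*} [NormedAddCommGroup V] [NormedSpace ℝ V] {G : V → ℝ}
    (hG : ContDiff ℝ (⊤ : ℕ∞) G) (e e' : V) (p : V) :
    fderiv ℝ (fun q => fderiv ℝ G q e) p e' = fderiv ℝ (fun q => fderiv ℝ G q e') p e := by
  have hd : DifferentiableAt ℝ (fderiv ℝ G) p :=
    ((hG.fderiv_right (m := (⊤ : ℕ∞)) (by norm_cast)).differentiable (by norm_num)) p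
  have hs : IsSymmSndFDerivAt ℝ G p := hG.contDiffAt.isSymmSndFDerivAt (by simp; norm_cast)
  rw [fderiv_clm_apply hd (by fun_prop), fderiv_clm_apply hd (by fun_prop)]
  simpa using hs e' e

lemma hasDerivAt_time {G : ℝ × Z → ℝ} (hG : ContDiff ℝ (⊤ : ℕ∞) G) (t : ℝ) (z : Z) :
    HasDerivAt (fun s => G (s, z)) (fderiv ℝ G (t, z) (1, 0)) t := by
  have h := (hG.differentiable (by norm_num) (t, z)).hasFDerivAt
  exact h.comp_hasDerivAt t ((hasDerivAt_id t).prodMk (hasDerivAt_const t z))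

/-- Spatial derivatives of a time slice are directional derivatives in spacetime. -/
lemma fderiv_space {G : ℝ × Z → ℝ} (hG : ContDiff ℝ (⊤ : ℕ∞) G) (t : ℝ) (z e : Z) :
    fderiv ℝ (fun y => G (t, y)) z e = fderiv ℝ G (t, z) (0, e) := by
  have h := (hG.differentiable (by norm_num) (t, z)).hasFDerivAt
  have h2 : HasFDerivAt (fun y : Z => (t, y)) (ContinuousLinearMap.inr ℝ ℝ Z) z :=
    hasFDerivAt_prodMk_right t z
  have := h.comp z h2
  change HasFDerivAt (fun y => G (t, y)) _ z at this
  rw [this.fderiv]; simp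

variable [MeasurableSpace Z] [OpensMeasurableSpace Z] {μ : Measure Z}

/-- Differentiation under the integral sign for a smooth family supported in a fixed compact
set, against a kernel that is integrable on that set. Since the time derivative of `G` satisfies
the same hypotheses, the derivative is itself differentiable, hence continuous, in `t`. -/
lemma hasDerivAt_integral_kernel {G : ℝ × Z → ℝ} (hG : ContDiff ℝ (⊤ : ℕ∞) G) {k : Z → ℝ}
    {K : Set Z} (hK : IsCompact K) (hsupp : ∀ p : ℝ × Z, p.2 ∉ K → G p = 0)
    (hk : IntegrableOn k K μ) (t : ℝ) :
    HasDerivAt (fun s => ∫ z, G (s, z) * k z ∂μ)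
      (∫ z, fderiv ℝ G (t, z) (1, 0) * k z ∂μ) t := by
  have hG' := contDiff_fderiv_dir hG (1, 0)
  have hsupp' := fderiv_vanish_off hK.isClosed hsupp (1, 0)
  have hint : ∀ s, Integrable (fun z => G (s, z) * k z) μ := fun s =>
    integrable_mul_kernel hK (hG.continuous.comp (by fun_prop)) (fun z hz => hsupp (s, z) hz) hk
  have hint' : ∀ s, Integrable (fun z => fderiv ℝ G (s, z) (1, 0) * k z) μ := fun s =>
    integrable_mul_kernel hK (H := fun z => fderiv ℝ G (s, z) (1, 0))
      (hG'.continuous.comp (by fun_prop : Continuous fun z : Z => (s, z)))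
      (fun z hz => hsupp' (s, z) hz) hk
  obtain ⟨M, hM⟩ := ((isCompact_closedBall t 1).prod hK).exists_bound_of_continuousOn
    hG'.continuous.continuousOn
  have hind : Integrable (fun z => M * ‖K.indicator k z‖) μ :=
    ((integrable_indicator_iff hK.measurableSet).2 hk).norm.const_mul M
  refine (hasDerivAt_integral_of_dominated_loc_of_deriv_le
    (F' := fun s z => fderiv ℝ G (s, z) (1, 0) * k z)
    (Metric.closedBall_mem_nhds t one_pos) (Eventually.of_forall fun s => (hint s).1) (hint t)
    (hint' t).1 (Eventually.of_forall fun z s hs => ?_) hind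
    (Eventually.of_forall fun z s _ => (hasDerivAt_time hG s z).mul_const (k z))).2
  by_cases hz : z ∈ K
  · rw [norm_mul, indicator_of_mem hz]
    exact mul_le_mul_of_nonneg_right (hM (s, z) ⟨hs, hz⟩) (norm_nonneg _)
  · simp [hz, hsupp' (s, z) hz]

end CompactSupport

/-- Since `4 < d`, `|x|^{-4}` is locally integrable on `ℝ^d`; on a product of balls the kernel 
agrees with the convolution integrand of two integrable truncations. -/
lemma integrableOn_kernel {d : ℕ} (hd : 5 ≤ d) (r : ℝ) :
    IntegrableOn (fun z : EuclideanSpace ℝ (Fin d) × EuclideanSpace ℝ (Fin d) =>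
      ‖z.1 - z.2‖ ^ (-4 : ℝ)) (Metric.closedBall 0 r ×ˢ Metric.closedBall 0 r) := by
  set X := EuclideanSpace ℝ (Fin d)
  have hm : Measurable fun x : X => ‖x‖ ^ (-4 : ℝ) := by fun_prop
  have h1 : IntegrableOn (fun x : X => ‖x‖ ^ (-4 : ℝ)) (Metric.closedBall 0 (2 * r)) := by
    have hloc : LocallyIntegrable (fun x : X => ‖x‖ ^ (-4 : ℝ)) := by
      refine locallyIntegrable_of_norm_le_rpow (C := 1) (α := 4) ?_ ?_ ?_ hm.aestronglyMeasurable
      · simp [X]; omega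
      · simp only [X, finrank_euclideanSpace_fin]; exact_mod_cast hd
      · refine Eventually.of_forall fun x => ?_
        rw [Real.norm_of_nonneg (by positivity), one_mul]
    exact hloc.integrableOn_isCompact (isCompact_closedBall _ _)
  have h2 : IntegrableOn (fun _ : X => (1 : ℝ)) (Metric.closedBall 0 r) :=
    continuous_const.continuousOn.integrableOn_compact (isCompact_closedBall _ _)
  have h3 := Integrable.convolution_integrand (ContinuousLinearMap.mul ℝ ℝ)
    ((integrable_indicator_iff measurableSet_closedBall).2 h2)
    ((integrable_indicator_iff measurableSet_closedBall).2 h1)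
  refine (h3.integrableOn (s := Metric.closedBall 0 r ×ˢ Metric.closedBall 0 r)).congr_fun ?_
    (measurableSet_closedBall.prod measurableSet_closedBall)
  rintro ⟨x, y⟩ ⟨hx, hy⟩
  have hxy : x - y ∈ Metric.closedBall (0 : X) (2 * r) := by
    simp only [mem_closedBall_zero_iff] at hx hy ⊢
    linarith [norm_sub_le x y]
  simp only [ContinuousLinearMap.mul_apply', indicator_of_mem hxy]
  rw [indicator_of_mem hy, one_mul]

/-! ### Time derivative of the energy -/

section Energy

variable {d : ℕ}

local notation "X" => EuclideanSpace ℝ (Fin d)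

lemma integrable_slice_mul {A B : ℝ × X → ℝ} (hA : ContDiff ℝ (⊤ : ℕ∞) A)
    (hB : ContDiff ℝ (⊤ : ℕ∞) B) {r : ℝ}
    (hs : ∀ p : ℝ × X, p.2 ∉ Metric.closedBall (0 : X) r → A p = 0) (t : ℝ) :
    Integrable (fun x : X => A (t, x) * B (t, x)) := by
  have hpair : Continuous fun x : X => (t, x) := by fun_prop
  have := integrable_mul_kernel (μ := (volume : Measure X)) (k := fun _ => (1 : ℝ))
    (H := fun x => A (t, x) * B (t, x)) (isCompact_closedBall (0 : X) r)
    ((hA.continuous.comp hpair).mul (hB.continuous.comp hpair))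
    (fun x hx => by simp [hs (t, x) hx])
    (continuous_const.continuousOn.integrableOn_compact (isCompact_closedBall _ _))
  simpa using this

/-- For every direction `e`, `∫ ∂ₑW · ∂ₜ∂ₑW = - ∫ ∂ₑ∂ₑW · ∂ₜW`, as `∂ₜ∂ₑW = ∂ₑ∂ₜW`. -/
lemma integral_gradient_by_parts {W : ℝ × X → ℝ} (hW : ContDiff ℝ (⊤ : ℕ∞) W) {r : ℝ}
    (hsupp : ∀ p : ℝ × X, p.2 ∉ Metric.closedBall (0 : X) r → W p = 0) (t : ℝ) (e : X) :
    ∫ x, fderiv ℝ W (t, x) (0, e) *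
        fderiv ℝ (fun q => fderiv ℝ W q (0, e)) (t, x) (1, 0)
      = - ∫ x, fderiv ℝ (fun y => fderiv ℝ (fun z => W (t, z)) y e) x e *
          fderiv ℝ W (t, x) (1, 0) := by
  have hc : IsClosed (Metric.closedBall (0 : X) r) := Metric.isClosed_closedBall
  have hWt := contDiff_fderiv_dir hW (1, 0)
  have hWe := contDiff_fderiv_dir hW (0, e)
  have se := fderiv_vanish_off hc hsupp (0, e)
  have hWee := contDiff_fderiv_dir hWe (0, e)
  have hWte := contDiff_fderiv_dir hWt (0, e)
  have see := fderiv_vanish_off hc se (0, e)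
  simp only [fderiv_space hW]
  simp_rw [fun x => fderiv_dir_comm hW (0, e) (1, 0) (t, x)]
  have h := integral_mul_fderiv_eq_neg_fderiv_mul_of_integrable (μ := (volume : Measure X))
    (f := fun x => fderiv ℝ W (t, x) (0, e)) (g := fun x => fderiv ℝ W (t, x) (1, 0)) (v := e)
    (by simp_rw [fun x => fderiv_space hWe t x e]; exact integrable_slice_mul hWee hWt see t)
    (by simp_rw [fun x => fderiv_space hWt t x e]; exact integrable_slice_mul hWe hWte se t)
    (integrable_slice_mul hWe hWt se t)
    (fun x _ => ((hWe.differentiable (by norm_num)).comp (by fun_prop : Differentiable ℝ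
      fun x : X => (t, x))) x)
    (fun x _ => ((hWt.differentiable (by norm_num)).comp (by fun_prop : Differentiable ℝ
      fun x : X => (t, x))) x)
  rw [← h]
  simp_rw [fun x => fderiv_space hWt t x e]

/-- The quadratic part of the energy is `C¹` in time with derivative `∫ ∂ₜW (∂ₜ²W - ΔW)`. -/
lemma kinetic_hasDerivAt {W : ℝ × X → ℝ} (hW : ContDiff ℝ (⊤ : ℕ∞) W) {r : ℝ}
    (hsupp : ∀ p : ℝ × X, p.2 ∉ Metric.closedBall (0 : X) r → W p = 0) :
    ∃ E' : ℝ → ℝ, Continuous E' ∧ ∀ t,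
      HasDerivAt (fun s => (1 / 2) * ∫ x, ((fderiv ℝ W (s, x) (1, 0)) ^ 2
        + ‖fderiv ℝ (fun y => W (s, y)) x‖ ^ 2)) (E' t) t ∧
      Integrable (fun x => fderiv ℝ W (t, x) (1, 0) *
        (fderiv ℝ (fun q => fderiv ℝ W q (1, 0)) (t, x) (1, 0)
          - euclidLaplacian d (fun y => W (t, y)) x)) ∧
      E' t = ∫ x, fderiv ℝ W (t, x) (1, 0) *
        (fderiv ℝ (fun q => fderiv ℝ W q (1, 0)) (t, x) (1, 0)
          - euclidLaplacian d (fun y => W (t, y)) x) := by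
  have hc : IsClosed (Metric.closedBall (0 : X) r) := Metric.isClosed_closedBall
  have hWt := contDiff_fderiv_dir hW (1, 0)
  have hWtt := contDiff_fderiv_dir hWt (1, 0)
  have hWi := fun i : Fin d => contDiff_fderiv_dir hW (0, EuclideanSpace.single i (1 : ℝ))
  have hWii := fun i : Fin d => contDiff_fderiv_dir (hWi i) (0, EuclideanSpace.single i (1 : ℝ))
  have hWit := fun i : Fin d => contDiff_fderiv_dir (hWi i) (1, 0)
  have st := fderiv_vanish_off hc hsupp (1, 0)
  have si := fun i : Fin d =>
    fderiv_vanish_off hc hsupp (0, EuclideanSpace.single i (1 : ℝ))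
  have hone : IntegrableOn (fun _ : X => (1 : ℝ)) (Metric.closedBall 0 r) :=
    continuous_const.continuousOn.integrableOn_compact (isCompact_closedBall _ _)
  set G : ℝ × X → ℝ := fun p => (fderiv ℝ W p (1, 0)) ^ 2
    + ∑ i : Fin d, (fderiv ℝ W p (0, EuclideanSpace.single i (1 : ℝ))) ^ 2 with hGdef
  have hG : ContDiff ℝ (⊤ : ℕ∞) G :=
    (hWt.pow 2).add (ContDiff.sum fun i _ => (hWi i).pow 2)
  have sG : ∀ p : ℝ × X, p.2 ∉ Metric.closedBall (0 : X) r → G p = 0 := by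
    intro p hp
    simp [hGdef, st p hp, si _ p hp]
  have hG' : ∀ t x, fderiv ℝ G (t, x) (1, 0) =
      2 * (fderiv ℝ W (t, x) (1, 0) * fderiv ℝ (fun q => fderiv ℝ W q (1, 0)) (t, x) (1, 0)
        + ∑ i : Fin d, fderiv ℝ W (t, x) (0, EuclideanSpace.single i (1 : ℝ)) *
          fderiv ℝ (fun q => fderiv ℝ W q (0, EuclideanSpace.single i (1 : ℝ))) (t, x) (1, 0)) := by
    intro t x
    refine (hasDerivAt_time hG t x).unique ?_
    have h1 := ((hasDerivAt_time hWt t x).fun_pow 2).fun_add (HasDerivAt.fun_sum (u := Finset.univ)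
      fun i _ => (hasDerivAt_time (hWi i) t x).fun_pow 2)
    refine h1.congr_deriv ?_
    rw [mul_add, Finset.mul_sum]
    simp only [Nat.cast_ofNat, Nat.add_one_sub_one, pow_one, mul_assoc]
  refine ⟨fun t => (1 / 2) * ∫ x, fderiv ℝ G (t, x) (1, 0) * 1, ?_, fun t => ⟨?_, ?_, ?_⟩⟩
  · refine continuous_const.mul (continuous_iff_continuousAt.2 fun t => ?_)
    exact (hasDerivAt_integral_kernel (contDiff_fderiv_dir hG (1, 0))
      (isCompact_closedBall (0 : X) r) (fderiv_vanish_off hc sG (1, 0)) hone t).continuousAt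
  · have h := (hasDerivAt_integral_kernel hG (isCompact_closedBall (0 : X) r) sG hone t).const_mul
      (1 / 2 : ℝ)
    refine h.congr_of_eventuallyEq (Eventually.of_forall fun s => congrArg _ ?_)
    refine integral_congr_ae (Eventually.of_forall fun x => ?_)
    simp only []
    rw [mul_one, (EuclideanSpace.basisFun (Fin d) ℝ).norm_dual]
    simp [hGdef, fderiv_space hW]
  · have h := (integrable_slice_mul hWt hWtt st t).sub (integrable_finsetSum Finset.univ fun i _ =>
      integrable_slice_mul hWt (hWii i) st t)
    refine h.congr (Eventually.of_forall fun x => ?_)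
    simp only [euclidLaplacian, fderiv_space hW, Pi.sub_apply]
    rw [mul_sub, Finset.mul_sum]
    simp_rw [fun i : Fin d => fderiv_space (hWi i) t x (EuclideanSpace.single i (1 : ℝ))]
  · simp only [mul_one, hG']
    rw [integral_const_mul, integral_add (integrable_slice_mul hWt hWtt st t) (integrable_finsetSum _ fun i _ =>
      integrable_slice_mul (hWi i) (hWit i) (si i) t), integral_finsetSum _ fun i _ =>
      integrable_slice_mul (hWi i) (hWit i) (si i) t]
    simp_rw [fun i : Fin d => integral_gradient_by_parts hW hsupp t (EuclideanSpace.single i 1)]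
    have hL : ∀ i : Fin d, Integrable (fun x : X =>
        fderiv ℝ (fun y => fderiv ℝ (fun z => W (t, z)) y (EuclideanSpace.single i 1)) x
          (EuclideanSpace.single i 1) * fderiv ℝ W (t, x) (1, 0)) := by
      intro i
      simp only [fderiv_space hW]
      simp_rw [fun x => fderiv_space (hWi i) t x (EuclideanSpace.single i (1 : ℝ)), mul_comm]
      exact integrable_slice_mul hWt (hWii i) st t
    rw [Finset.sum_neg_distrib, ← integral_finsetSum _ fun i _ => hL i, ← sub_eq_add_neg,
      ← integral_sub (integrable_slice_mul hWt hWtt st t) (integrable_finsetSum _ fun i _ => hL i), ← mul_assoc]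
    norm_num only [one_mul]
    refine integral_congr_ae (Eventually.of_forall fun x => ?_)
    simp only [euclidLaplacian]
    rw [← Finset.sum_mul]
    ring

/-- The potential part of the energy is `C¹` in time with derivative `∫ ∂ₜW · 𝒩(W)`. It is an
integral over `ℝ^d × ℝ^d` against the kernel, and the two terms of the product rule contribute
equally by the symmetry of the kernel. -/
lemma potential_hasDerivAt (hd : 5 ≤ d) {W : ℝ × X → ℝ} (hW : ContDiff ℝ (⊤ : ℕ∞) W) {r : ℝ}
    (hsupp : ∀ p : ℝ × X, p.2 ∉ Metric.closedBall (0 : X) r → W p = 0) :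
    ∃ E' : ℝ → ℝ, Continuous E' ∧ ∀ t,
      HasDerivAt (fun s => (1 / 4) * ∫ x, ∫ y, (W (s, x)) ^ 2 * (W (s, y)) ^ 2
        * ‖x - y‖ ^ (-4 : ℝ)) (E' t) t ∧
      Integrable (fun x => fderiv ℝ W (t, x) (1, 0) *
        hartreeNonlinearity d (fun y => W (t, y)) x) ∧
      E' t = ∫ x, fderiv ℝ W (t, x) (1, 0) *
        hartreeNonlinearity d (fun y => W (t, y)) x := by
  have hWt := contDiff_fderiv_dir hW (1, 0)
  have st := fderiv_vanish_off Metric.isClosed_closedBall hsupp (1, 0)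
  set K : Set (X × X) := Metric.closedBall 0 r ×ˢ Metric.closedBall 0 r with hKdef
  have hK : IsCompact K := (isCompact_closedBall _ _).prod (isCompact_closedBall _ _)
  have hk : IntegrableOn (fun z : X × X => ‖z.1 - z.2‖ ^ (-4 : ℝ)) K := integrableOn_kernel hd r
  set G : ℝ × (X × X) → ℝ := fun p => (W (p.1, p.2.1)) ^ 2 * (W (p.1, p.2.2)) ^ 2 with hGdef
  have h1 : ContDiff ℝ (⊤ : ℕ∞) fun p : ℝ × (X × X) => (p.1, p.2.1) := by fun_prop
  have h2 : ContDiff ℝ (⊤ : ℕ∞) fun p : ℝ × (X × X) => (p.1, p.2.2) := by fun_prop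
  have hG : ContDiff ℝ (⊤ : ℕ∞) G := ((hW.comp h1).pow 2).mul ((hW.comp h2).pow 2)
  have sG : ∀ p : ℝ × (X × X), p.2 ∉ K → G p = 0 := by
    rintro ⟨t, x, y⟩ hp
    simp only [hKdef, mem_prod, not_and_or] at hp
    rcases hp with hp | hp
    · simp [hGdef, hsupp (t, x) hp]
    · simp [hGdef, hsupp (t, y) hp]
  -- `∂ₜG` times the kernel is `2 P` plus twice the image of `P` under exchanging `x` and `y`.
  set P : ℝ → X × X → ℝ := fun t z =>
    fderiv ℝ W (t, z.1) (1, 0) * W (t, z.1) * (W (t, z.2)) ^ 2 * ‖z.1 - z.2‖ ^ (-4 : ℝ) with hPdef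
  have hP : ∀ t, Integrable (P t) := by
    intro t
    have hx : Continuous fun z : X × X => (t, z.1) := by fun_prop
    have hy : Continuous fun z : X × X => (t, z.2) := by fun_prop
    refine integrable_mul_kernel hK (H := fun z : X × X =>
      fderiv ℝ W (t, z.1) (1, 0) * W (t, z.1) * (W (t, z.2)) ^ 2)
      (((hWt.continuous.comp hx).mul (hW.continuous.comp hx)).mul
        ((hW.continuous.comp hy).pow 2)) ?_ hk
    rintro ⟨x, y⟩ hp
    simp only [hKdef, mem_prod, not_and_or] at hp
    rcases hp with hp | hp
    · simp [hsupp (t, x) hp]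
    · simp [hsupp (t, y) hp]
  have hG' : ∀ t z, fderiv ℝ G (t, z) (1, 0) * ‖z.1 - z.2‖ ^ (-4 : ℝ)
      = 2 * (P t z + P t z.swap) := by
    rintro t ⟨x, y⟩
    have h := (hasDerivAt_time hG t (x, y)).unique
      (((hasDerivAt_time hW t x).fun_pow 2).fun_mul ((hasDerivAt_time hW t y).fun_pow 2))
    rw [h]
    simp only [hPdef, Prod.swap, norm_sub_rev y x]
    push_cast
    ring
  have hPx : ∀ t x, ∫ y, P t (x, y) =
      fderiv ℝ W (t, x) (1, 0) * hartreeNonlinearity d (fun y => W (t, y)) x := by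
    intro t x
    simp only [hartreeNonlinearity, hPdef]
    rw [← mul_assoc, mul_right_comm, ← integral_const_mul]
    exact integral_congr_ae (Eventually.of_forall fun y => by simp only; ring)
  refine ⟨fun t => (1 / 4) * ∫ z, fderiv ℝ G (t, z) (1, 0) * ‖z.1 - z.2‖ ^ (-4 : ℝ), ?_,
    fun t => ⟨?_, ?_, ?_⟩⟩
  · refine continuous_const.mul (continuous_iff_continuousAt.2 fun t => ?_)
    exact (hasDerivAt_integral_kernel (contDiff_fderiv_dir hG (1, 0))
      hK (fderiv_vanish_off hK.isClosed sG (1, 0)) hk t).continuousAt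
  · have h := (hasDerivAt_integral_kernel hG hK sG hk t).const_mul (1 / 4 : ℝ)
    refine h.congr_of_eventuallyEq (Eventually.of_forall fun s => congrArg _ ?_)
    have hint := integrable_mul_kernel hK (H := fun z => G (s, z))
      (hG.continuous.comp (by fun_prop)) (fun z hz => sG (s, z) hz) hk
    exact (integral_prod _ hint).symm
  · exact (hP t).integral_prod_left.congr (Eventually.of_forall fun x => hPx t x)
  · have hsw : ∫ z : X × X, P t z.swap = ∫ z, P t z :=
      integral_prod_swap (μ := (volume : Measure X)) (ν := (volume : Measure X)) (P t)
    have hPs : Integrable fun z : X × X => P t z.swap := (hP t).swap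
    simp only [hG']
    rw [integral_const_mul, integral_add (hP t) hPs, hsw]
    have : ∫ z, P t z = ∫ x, ∫ y, P t (x, y) := integral_prod _ (hP t)
    rw [this]
    simp only [hPx]
    ring

end Energy

/-! ### The energy identity -/

/-- Derivatives at the endpoints of `[0, T]` are determined by the values on `[0, T]`, so no
information outside the time interval is needed. -/
lemma hasDerivAt_eq_of_eqOn_Icc {g h : ℝ → ℝ} {T t g' h' : ℝ} (hT : 0 < T)
    (heq : ∀ s ∈ Icc (0 : ℝ) T, g s = h s) (ht : t ∈ Icc (0 : ℝ) T)
    (hg : HasDerivAt g g' t) (hh : HasDerivAt h h' t) : g' = h' := by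
  have h1 : HasDerivWithinAt g h' (Icc 0 T) t :=
    hh.hasDerivWithinAt.congr heq (heq t ht)
  exact (uniqueDiffOn_Icc hT t ht).eq_deriv _ hg.hasDerivWithinAt h1

/-- Energy identity for smooth compactly supported solutions of the perturbed Hartree
nonlinear wave equation `∂²_t v = Δv - 𝒩(v + f)` with zero initial data:
`E(v(t), ∂_t v(t)) = - ∫₀ᵗ ∫ ∂_{t'} v (𝒩(v+f) - 𝒩(v)) dx dt'`. -/
theorem perturbed_hartree_wave_energy_identity (d : ℕ) (hd : 5 ≤ d) (T : ℝ) (hT : 0 < T)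
    (v f : ℝ → EuclideanSpace ℝ (Fin d) → ℝ)
    (hvsmooth : ContDiff ℝ (⊤ : ℕ∞) (fun p : ℝ × EuclideanSpace ℝ (Fin d) => v p.1 p.2))
    (hfsmooth : ContDiff ℝ (⊤ : ℕ∞) (fun p : ℝ × EuclideanSpace ℝ (Fin d) => f p.1 p.2))
    (R : ℝ) (hR : 0 < R)
    (hsupp : ∀ t ∈ Set.Icc (0 : ℝ) T,
      Function.support (v t) ∪ Function.support (f t)
        ⊆ Metric.closedBall (0 : EuclideanSpace ℝ (Fin d)) R)
    (hPDE : ∀ t ∈ Set.Icc (0 : ℝ) T, ∀ x,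
      deriv (fun s => deriv (fun s' => v s' x) s) t
        = euclidLaplacian d (v t) x
          - hartreeNonlinearity d (fun y => v t y + f t y) x)
    (hv0 : ∀ x, v 0 x = 0) (hv0' : ∀ x, deriv (fun s => v s x) 0 = 0) :
    ∀ t ∈ Set.Icc (0 : ℝ) T,
      hartreeEnergy d (v t) (fun x => deriv (fun s => v s x) t)
        = - ∫ t' in (0 : ℝ)..t, ∫ x, deriv (fun s => v s x) t' *
            (hartreeNonlinearity d (fun y => v t' y + f t' y) x
              - hartreeNonlinearity d (v t') x) := by
  intro t ht
  -- The cutoff equals `1` on the ball of radius `R`, which contains the support of `v s` for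
  -- `s ∈ [0, T]`; hence `W = v` there, while `W` has uniformly compact support for all times.
  let χ : ContDiffBump (0 : EuclideanSpace ℝ (Fin d)) := ⟨R, R + 1, hR, by linarith⟩
  set W : ℝ × EuclideanSpace ℝ (Fin d) → ℝ := fun p => χ p.2 * v p.1 p.2 with hWdef
  have hW : ContDiff ℝ (⊤ : ℕ∞) W := (χ.contDiff.comp contDiff_snd).mul hvsmooth
  have hWt := contDiff_fderiv_dir hW (1, 0)
  have sW : ∀ p : ℝ × EuclideanSpace ℝ (Fin d),
      p.2 ∉ Metric.closedBall (0 : EuclideanSpace ℝ (Fin d)) (R + 1) → W p = 0 := by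
    intro p hp
    have : χ p.2 = 0 := χ.zero_of_le_dist (by
      simp only [Metric.mem_closedBall, not_le] at hp; exact hp.le)
    simp [hWdef, this]
  have hWv : ∀ s ∈ Icc (0 : ℝ) T, ∀ x, W (s, x) = v s x := by
    intro s hs x
    by_cases hx : x ∈ Metric.closedBall (0 : EuclideanSpace ℝ (Fin d)) R
    · simp [hWdef, χ.one_of_mem_closedBall hx]
    · have : v s x = 0 := by
        by_contra h
        exact hx (hsupp s hs (Or.inl h))
      simp [hWdef, this]
  have hVt := contDiff_fderiv_dir hvsmooth (1, 0)
  have hvt : ∀ s x, deriv (fun s' => v s' x) s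
      = fderiv ℝ (fun p : ℝ × EuclideanSpace ℝ (Fin d) => v p.1 p.2) (s, x) (1, 0) :=
    fun s x => (hasDerivAt_time hvsmooth s x).deriv
  have hWt_eq : ∀ s ∈ Icc (0 : ℝ) T, ∀ x,
      fderiv ℝ W (s, x) (1, 0) = deriv (fun s' => v s' x) s := by
    intro s hs x
    rw [hvt]
    exact hasDerivAt_eq_of_eqOn_Icc hT (fun s' hs' => hWv s' hs' x) hs (hasDerivAt_time hW s x)
      (hasDerivAt_time hvsmooth s x)
  have hWtt_eq : ∀ s ∈ Icc (0 : ℝ) T, ∀ x,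
      fderiv ℝ (fun q => fderiv ℝ W q (1, 0)) (s, x) (1, 0)
        = deriv (fun s' => deriv (fun s'' => v s'' x) s') s := by
    intro s hs x
    simp only [hvt]
    rw [(hasDerivAt_time hVt s x).deriv]
    exact hasDerivAt_eq_of_eqOn_Icc hT (fun s' hs' => (hWt_eq s' hs' x).trans (hvt s' x)) hs
      (hasDerivAt_time hWt s x) (hasDerivAt_time hVt s x)
  have hWfun : ∀ s ∈ Icc (0 : ℝ) T, (fun x => W (s, x)) = v s := fun s hs =>
    funext fun x => hWv s hs x
  obtain ⟨E₁, hE₁c, hE₁⟩ := kinetic_hasDerivAt hW sW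
  obtain ⟨E₂, hE₂c, hE₂⟩ := potential_hasDerivAt hd hW sW
  have hFTC := intervalIntegral.integral_eq_sub_of_hasDerivAt (a := 0) (b := t)
    (fun s _ => (hE₁ s).1.fun_add (hE₂ s).1) ((hE₁c.add hE₂c).intervalIntegrable 0 t)
  have henergy : ∀ s ∈ Icc (0 : ℝ) T,
      hartreeEnergy d (v s) (fun x => deriv (fun s' => v s' x) s)
      = (1 / 2) * (∫ x, ((fderiv ℝ W (s, x) (1, 0)) ^ 2
          + ‖fderiv ℝ (fun y => W (s, y)) x‖ ^ 2))
        + (1 / 4) * ∫ x, ∫ y, (W (s, x)) ^ 2 * (W (s, y)) ^ 2 * ‖x - y‖ ^ (-4 : ℝ) := by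
    intro s hs
    simp only [hartreeEnergy, hWt_eq s hs, hWv s hs]
  have hzero : hartreeEnergy d (v 0) (fun x => deriv (fun s' => v s' x) 0) = 0 := by
    have : v 0 = fun _ => 0 := funext hv0
    simp only [hartreeEnergy, hv0']
    simp [this]
  rw [← henergy t ht, ← henergy 0 ⟨le_rfl, hT.le⟩, hzero, sub_zero] at hFTC
  rw [← hFTC, ← intervalIntegral.integral_neg]
  refine intervalIntegral.integral_congr fun s hs => ?_
  rw [uIcc_of_le ht.1] at hs
  have hsT : s ∈ Icc (0 : ℝ) T := ⟨hs.1, hs.2.trans ht.2⟩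
  beta_reduce
  rw [(hE₁ s).2.2, (hE₂ s).2.2, ← integral_add (hE₁ s).2.1 (hE₂ s).2.1, ← integral_neg]
  refine integral_congr_ae (Eventually.of_forall fun x => ?_)
  simp only [hWt_eq s hsT, hWtt_eq s hsT, hWfun s hsT]
  rw [hPDE s hsT x]
  ring
end

section
/- There exists a constant C > 0 such that for every Schwartz function v : ℝ⁵ → ℝ, ‖v‖_{L^{10/3}(ℝ⁵)} ≤ C ‖∇v‖^{1/5}_{L²(ℝ⁵)} ‖ |·|^{-19/4} ∗ v ‖^{4/5}_{L⁴(ℝ⁵)}, where ( |·|^{-19/4} ∗ v )(x) = ∫_{ℝ⁵} |x − y|^{-19/4} v(y) dy. -/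
open MeasureTheory ENNReal SchwartzMap

/-!
Write `w = |·|^{-19/4} ∗ v` and let `M` be the uncentred Hardy-Littlewood maximal operator. The
theorem follows from the pointwise bound

  `|v| ≤ C (M|∇v|)^{1/5} (M w)^{4/5}`    (lemma `pointwise`),

Hölder's inequality with exponents `3` and `3/2` (lemma `holder`), and the boundedness of `M` on
`L²` (lemma `maxFun_sq`: Vitali covering gives the weak `(1,1)` bound, and the layer cake formula
upgrades it) and on `L⁴` (lemma `maxFun_pow_four`: `(M f)² ≤ M(f²)` by Cauchy-Schwarz). All the
functions to which `M` is applied are bounded, so no question of finiteness arises.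

For the pointwise bound, let `φ(z) = (1 + |z|²)^{-27/8}`, which is integrable on `ℝ⁵`, and for
`t > 0` compare `v(x)` with the average `A₀⁻¹ ∫ φ(z) v(x - t z) dz`, where `A₀ = ∫ φ`.

* The difference is `≲ t M|∇v|(x)`, by the fundamental theorem of calculus along segments
  (lemma `high_frequency`).
* The average is `≲ t^{-1/4} M w(x)` (lemma `low_frequency`). Indeed `φ` is itself a Riesz
  potential, `c φ = |·|^{-19/4} ∗ ψ`, with
  `ψ = Γ(29/8) (1 + |·|²)^{-29/8} - (Γ(21/8)/8) (1 + |·|²)^{-21/8}`,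
  so the symmetric kernel can be moved from `ψ` to `v` by Fubini, and `ψ` is dominated by the
  integrable radially decreasing function `(1 + |·|²)^{-21/8}`.

Choosing the best `t` gives the bound. The identity for `φ` (lemma `exists_riesz_psi`) comes from
writing both the kernel and the power of `1 + |y|²` as Gamma integrals of Gaussians, which turns
`|·|^{-19/4} ∗ (1 + |·|²)^{-a}` into an explicit double integral (lemma `riesz_jap`). For `a = 21/8`
this is a multiple of `(1 + |·|²)^{-19/8}`, which is not integrable; for `a = 29/8` it is a
combination of the exponents `27/8` and `19/8`, and in `ψ` the nonintegrable terms cancel.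
-/

namespace RieszInterp
open Metric Set

/-! ### The maximal function -/

/-- The space `ℝ⁵` with its Euclidean norm. -/
abbrev E5 := EuclideanSpace ℝ (Fin 5)

/-- The uncentred Hardy-Littlewood maximal function: the supremum of the averages of `f` over all
open balls containing `x`. Balls are indexed by all pairs (centre, radius); those not containing
`x`, in particular the empty ones, contribute `0`. -/
noncomputable def maxFun (f : E5 → ℝ≥0∞) (x : E5) : ℝ≥0∞ :=
  ⨆ p : E5 × ℝ, (ball p.1 p.2).indicator
    (fun _ => (∫⁻ y in ball p.1 p.2, f y) / volume (ball p.1 p.2)) x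

lemma measurable_maxFun (f : E5 → ℝ≥0∞) : Measurable (maxFun f) := by
  have : LowerSemicontinuous (maxFun f) := by
    unfold maxFun
    apply lowerSemicontinuous_iSup
    intro p
    exact isOpen_ball.lowerSemicontinuous_indicator (zero_le)
  exact this.measurable

lemma setLIntegral_ball_le (f : E5 → ℝ≥0∞) (x c : E5) (r : ℝ) (hx : x ∈ ball c r) :
    ∫⁻ y in ball c r, f y ≤ volume (ball c r) * maxFun f x := by
  have hr : 0 < r := pos_of_mem_ball hx
  have h := le_iSup (fun p : E5 × ℝ => (ball p.1 p.2).indicator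
    (fun _ => (∫⁻ y in ball p.1 p.2, f y) / volume (ball p.1 p.2)) x) (c, r)
  simp only [indicator_of_mem hx] at h
  rw [ENNReal.div_le_iff_le_mul (Or.inl (measure_ball_pos _ _ hr).ne')
    (Or.inl measure_ball_lt_top.ne)] at h
  rw [mul_comm]
  exact h

lemma maxFun_le (f : E5 → ℝ≥0∞) (B : ℝ≥0∞) (hf : ∀ x, f x ≤ B) (x : E5) : maxFun f x ≤ B := by
  refine iSup_le fun p => ?_
  by_cases hx : x ∈ ball p.1 p.2
  · rw [indicator_of_mem hx]
    refine ENNReal.div_le_of_le_mul ?_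
    calc ∫⁻ y in ball p.1 p.2, f y ≤ ∫⁻ y in ball p.1 p.2, B := lintegral_mono fun y => hf y
      _ = _ := by simp
  · simp [indicator_of_notMem hx]

/-- The weak `(1,1)` bound for the maximal function: the balls on which the average of `g` is at
least `l` cover `{l < maxFun g}`, and the Vitali lemma extracts a disjoint subfamily whose fivefold
enlargements still cover. -/
lemma weak_type (g : E5 → ℝ≥0∞) (l : ℝ≥0∞) (hl0 : l ≠ 0) (hl : l ≠ ∞) :
    l * volume {x | l < maxFun g x} ≤ 5 ^ 5 * ∫⁻ y, g y := by
  by_cases hg : ∫⁻ y, g y = ∞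
  · simp [hg]
  set t : Set (E5 × ℝ) := {p | 0 < p.2 ∧ l * volume (ball p.1 p.2) ≤ ∫⁻ y in ball p.1 p.2, g y}
    with ht
  have hcover : {x | l < maxFun g x} ⊆ ⋃ p ∈ t, ball p.1 p.2 := by
    intro x hx
    obtain ⟨p, hp⟩ := lt_iSup_iff.1 (show l < maxFun g x from hx)
    have hxp : x ∈ ball p.1 p.2 := by
      by_contra h
      simp [indicator_of_notMem h] at hp
    rw [indicator_of_mem hxp] at hp
    refine mem_biUnion (x := p) ⟨pos_of_mem_ball hxp, ?_⟩ hxp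
    exact (ENNReal.le_div_iff_mul_le (Or.inl (measure_ball_pos _ _ (pos_of_mem_ball hxp)).ne')
      (Or.inl measure_ball_lt_top.ne)).1 hp.le
  have hvol : ∀ (c : E5) (r : ℝ), 0 < r →
      volume (ball c r) = ENNReal.ofReal (r ^ 5) * volume (ball (0 : E5) 1) := by
    intro c r hr
    rw [Measure.addHaar_ball_of_pos _ _ hr]; simp
  -- a ball of `t` has volume at most `l⁻¹ ∫ g`, so its radius is bounded
  obtain ⟨R, hR⟩ : ∃ R : ℝ, ∀ p ∈ t, p.2 ≤ R := by
    have hb0 : volume (ball (0 : E5) 1) ≠ 0 := (measure_ball_pos _ _ one_pos).ne'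
    set D : ℝ≥0∞ := (∫⁻ y, g y) / l / volume (ball (0 : E5) 1) with hD
    have hDt : D ≠ ∞ := by
      simp [hD, ENNReal.div_eq_top, hg, hl0, hb0]
    refine ⟨max 1 D.toReal, fun p hp => ?_⟩
    by_contra! hcon
    have h1 : 1 < p.2 := lt_of_le_of_lt (le_max_left _ _) hcon
    have h2 : D.toReal < p.2 := lt_of_le_of_lt (le_max_right _ _) hcon
    have h3 : D < ENNReal.ofReal (p.2 ^ 5) := by
      rw [← ENNReal.ofReal_toReal hDt]
      apply (ENNReal.ofReal_lt_ofReal_iff (by positivity)).2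
      exact h2.trans_le (le_self_pow₀ h1.le (by norm_num))
    have h4 : ENNReal.ofReal (p.2 ^ 5) ≤ D := by
      rw [hD, ENNReal.le_div_iff_mul_le (Or.inl hb0) (Or.inl measure_ball_lt_top.ne),
        ENNReal.le_div_iff_mul_le (Or.inl hl0) (Or.inl hl), ← hvol p.1 p.2 hp.1, mul_comm]
      exact hp.2.trans (setLIntegral_le_lintegral _ _)
    exact absurd h3 (not_lt.2 h4)
  obtain ⟨u, hut, hdisj, hu⟩ := Vitali.exists_disjoint_subfamily_covering_enlargement_closedBall
    t (fun p => p.1) (fun p => p.2) R hR 5 (by norm_num)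
  have hdisj' : u.PairwiseDisjoint fun p => ball p.1 p.2 :=
    hdisj.mono fun p => ball_subset_closedBall
  have hcount : u.Countable :=
    hdisj'.countable_of_isOpen (fun p _ => isOpen_ball) (fun p hp => nonempty_ball.2 (hut hp).1)
  have hsub : {x | l < maxFun g x} ⊆ ⋃ p ∈ u, closedBall p.1 (5 * p.2) := by
    refine hcover.trans (iUnion₂_subset fun p hp => ?_)
    obtain ⟨b, hb, hpb⟩ := hu p hp
    exact ball_subset_closedBall.trans (hpb.trans
      (subset_biUnion_of_mem (u := fun b : E5 × ℝ => closedBall b.1 (5 * b.2)) hb))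
  have := hcount.to_subtype
  calc l * volume {x | l < maxFun g x}
      ≤ l * ∑' p : u, volume (closedBall p.1.1 (5 * p.1.2)) := by
        gcongr
        exact (measure_mono hsub).trans (measure_biUnion_le _ hcount _)
    _ = ∑' p : u, 5 ^ 5 * (l * volume (ball p.1.1 p.1.2)) := by
        rw [← ENNReal.tsum_mul_left]
        congr 1; ext p
        have hp : 0 < p.1.2 := (hut p.2).1
        rw [Measure.addHaar_closedBall_eq_addHaar_ball, hvol _ _ hp, hvol _ _ (by positivity),
          mul_pow, ENNReal.ofReal_mul (by positivity)]
        have : ENNReal.ofReal (5 ^ 5) = 5 ^ 5 := by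
          rw [ENNReal.ofReal_pow (by norm_num)]; norm_num
        rw [this]; ring
    _ ≤ ∑' p : u, 5 ^ 5 * ∫⁻ y in ball p.1.1 p.1.2, g y := by
        gcongr with p
        exact (hut p.2).2
    _ = 5 ^ 5 * ∫⁻ y in ⋃ p ∈ u, ball p.1 p.2, g y := by
        rw [ENNReal.tsum_mul_left, lintegral_biUnion hcount (fun _ _ => measurableSet_ball) hdisj']
    _ ≤ 5 ^ 5 * ∫⁻ y, g y := by
        gcongr 1
        exact setLIntegral_le_lintegral _ _

/-- The `L²` maximal inequality for bounded `f`. By the layer cake formula it suffices to bound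
`|{t < maxFun f}|`; at each level `t` the part of `f` below `t / 2` raises the maximal function by
at most `t / 2`, so `weak_type` is applied to the part of `f` above `t / 2` only. -/
lemma maxFun_sq (f : E5 → ℝ≥0∞) (hfm : Measurable f) (B : ℝ≥0∞) (hB : B ≠ ∞) (hf : ∀ x, f x ≤ B) :
    ∫⁻ x, maxFun f x ^ 2 ≤ 8 * 5 ^ 5 * ∫⁻ x, f x ^ 2 := by
  have hfin : ∀ x, maxFun f x ≠ ∞ := fun x => ne_top_of_le_ne_top hB (maxFun_le f B hf x)
  have hffin : ∀ x, f x ≠ ∞ := fun x => ne_top_of_le_ne_top hB (hf x)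
  have h1 := lintegral_rpow_eq_lintegral_meas_lt_mul (volume : Measure E5)
    (f := fun x => (maxFun f x).toReal) (Filter.Eventually.of_forall fun x => ENNReal.toReal_nonneg)
    (measurable_maxFun f).ennreal_toReal.aemeasurable (p := 2) (by norm_num)
  have h2 : ∫⁻ x, maxFun f x ^ 2 = ∫⁻ x, ENNReal.ofReal ((maxFun f x).toReal ^ (2 : ℝ)) := by
    congr 1; ext x
    rw [ENNReal.toReal_rpow, ENNReal.ofReal_toReal (by simp [hfin])]
    norm_num
  have hw : ∀ t ∈ Ioi (0 : ℝ), volume {a | t < (maxFun f a).toReal} * ENNReal.ofReal (t ^ (2 - 1 : ℝ))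
      ≤ 2 * 5 ^ 5 * ∫⁻ y, {y | ENNReal.ofReal (t / 2) < f y}.indicator f y := by
    intro t ht
    have ht : 0 < t := ht
    set l := ENNReal.ofReal (t / 2) with hl
    set g := {y | l < f y}.indicator f with hg
    have hfg : ∀ y, f y ≤ l + g y := by
      intro y
      by_cases h : l < f y
      · rw [hg, indicator_of_mem (show y ∈ {y | l < f y} from h)]; simp
      · exact (not_lt.1 h).trans (by simp)
    have hM : ∀ x, maxFun f x ≤ l + maxFun g x := by
      intro x
      refine iSup_le fun p => ?_
      by_cases hx : x ∈ ball p.1 p.2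
      · rw [indicator_of_mem hx]
        refine ENNReal.div_le_of_le_mul ?_
        calc ∫⁻ y in ball p.1 p.2, f y ≤ ∫⁻ y in ball p.1 p.2, (l + g y) := lintegral_mono fun y => hfg y
          _ = l * volume (ball p.1 p.2) + ∫⁻ y in ball p.1 p.2, g y := by
            rw [lintegral_add_left measurable_const]; simp
          _ ≤ _ := by
            rw [add_mul, mul_comm (maxFun g x)]
            gcongr
            exact setLIntegral_ball_le g x _ _ hx
      · simp [indicator_of_notMem hx]
    have hsub : {a | t < (maxFun f a).toReal} ⊆ {a | l < maxFun g a} := by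
      intro a ha
      have h3 : ENNReal.ofReal t < maxFun f a := (ENNReal.ofReal_lt_iff_lt_toReal ht.le (hfin a)).2 ha
      have h4 : ENNReal.ofReal t = l + l := by
        rw [hl, ← ENNReal.ofReal_add (by positivity) (by positivity)]; congr 1; ring
      have h5 := h3.trans_le (hM a)
      rw [h4] at h5
      exact lt_of_add_lt_add_left h5
    have h6 : ENNReal.ofReal (t ^ (2 - 1 : ℝ)) = 2 * l := by
      rw [hl, show (2 : ℝ≥0∞) = ENNReal.ofReal 2 by simp, ← ENNReal.ofReal_mul (by norm_num)]
      congr 1; norm_num; ring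
    rw [h6]
    calc _ ≤ volume {a | l < maxFun g a} * (2 * l) := by gcongr
      _ = 2 * (l * volume {a | l < maxFun g a}) := by ring
      _ ≤ 2 * (5 ^ 5 * ∫⁻ y, g y) := by
        gcongr 2 * ?_
        exact weak_type g l (by simp [hl, ht]) (by simp [hl])
      _ = _ := by ring
  rw [h2, h1]
  calc _ ≤ ENNReal.ofReal 2 * ∫⁻ t in Ioi (0 : ℝ), 2 * 5 ^ 5 * ∫⁻ y, {y | ENNReal.ofReal (t / 2) < f y}.indicator f y := by
        gcongr 1
        exact setLIntegral_mono' measurableSet_Ioi hw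
    _ = 4 * 5 ^ 5 * ∫⁻ t in Ioi (0 : ℝ), ∫⁻ y, {y | ENNReal.ofReal (t / 2) < f y}.indicator f y := by
        rw [lintegral_const_mul']
        · rw [← mul_assoc]; congr 1; simp; ring
        · finiteness
    _ = 4 * 5 ^ 5 * ∫⁻ y, ∫⁻ t in Ioi (0 : ℝ), {y | ENNReal.ofReal (t / 2) < f y}.indicator f y := by
        rw [lintegral_lintegral_swap]
        apply Measurable.aemeasurable
        have : (Function.uncurry fun (t : ℝ) y => {y | ENNReal.ofReal (t / 2) < f y}.indicator f y)
          = {p : ℝ × E5 | ENNReal.ofReal (p.1 / 2) < f p.2}.indicator (fun p => f p.2) := by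
          ext p; simp [Function.uncurry, indicator]
        rw [this]
        exact (hfm.comp measurable_snd).indicator (measurableSet_lt (by fun_prop) (by fun_prop))
    _ = 4 * 5 ^ 5 * ∫⁻ y, 2 * f y ^ 2 := by
        congr 2; ext y
        have : ∀ t ∈ Ioi (0:ℝ), {y | ENNReal.ofReal (t / 2) < f y}.indicator f y
            = (Iio (2 * (f y).toReal)).indicator (fun _ => f y) t := by
          intro t ht
          have ht : 0 < t := ht
          have h7 : ENNReal.ofReal (t / 2) < f y ↔ t < 2 * (f y).toReal := by
            rw [ENNReal.ofReal_lt_iff_lt_toReal (by positivity) (hffin y)]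
            constructor <;> intro h <;> linarith
          simp [indicator, h7]
        rw [setLIntegral_congr_fun measurableSet_Ioi this, lintegral_indicator measurableSet_Iio,
          Measure.restrict_restrict measurableSet_Iio, setLIntegral_const, Iio_inter_Ioi,
          Real.volume_Ioo, sub_zero, ENNReal.ofReal_mul (by norm_num), ENNReal.ofReal_toReal (hffin y)]
        simp; ring
    _ = _ := by
        rw [lintegral_const_mul' _ _ (by simp)]; ring

lemma maxFun_sq_le (f : E5 → ℝ≥0∞) (hfm : Measurable f) (x : E5) :
    maxFun f x ^ 2 ≤ maxFun (fun y => f y ^ 2) x := by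
  have : maxFun f x ≤ maxFun (fun y => f y ^ 2) x ^ (1 / 2 : ℝ) := by
    refine iSup_le fun p => ?_
    by_cases hx : x ∈ ball p.1 p.2
    · rw [indicator_of_mem hx]
      refine ENNReal.div_le_of_le_mul ?_
      have h := ENNReal.lintegral_mul_le_Lp_mul_Lq (volume.restrict (ball p.1 p.2))
        Real.HolderConjugate.two_two hfm.aemeasurable (g := 1) (aemeasurable_const)
      simp only [Pi.mul_apply, Pi.one_apply, mul_one, one_pow, lintegral_const, one_mul,
        Measure.restrict_apply_univ, ENNReal.rpow_ofNat] at h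
      refine h.trans ?_
      have h2 := setLIntegral_ball_le (fun y => f y ^ 2) x _ _ hx
      set V := volume (ball p.1 p.2)
      calc _ ≤ (V * maxFun (fun y => f y ^ 2) x) ^ (1 / 2 : ℝ) * V ^ (1 / 2 : ℝ) := by gcongr
        _ = maxFun (fun y => f y ^ 2) x ^ (1 / 2 : ℝ) * (V ^ (1 / 2 : ℝ) * V ^ (1 / 2 : ℝ)) := by
          rw [ENNReal.mul_rpow_of_nonneg _ _ (by norm_num)]; ring
        _ = _ := by
          rw [← ENNReal.rpow_add_of_nonneg _ _ (by norm_num) (by norm_num)]; norm_num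
    · simp [indicator_of_notMem hx]
  calc _ ≤ (maxFun (fun y => f y ^ 2) x ^ (1 / 2 : ℝ)) ^ 2 := by gcongr
    _ = _ := by rw [← ENNReal.rpow_natCast, ← ENNReal.rpow_mul]; norm_num

lemma maxFun_pow_four (f : E5 → ℝ≥0∞) (hfm : Measurable f) (B : ℝ≥0∞) (hB : B ≠ ∞)
    (hf : ∀ x, f x ≤ B) :
    ∫⁻ x, maxFun f x ^ 4 ≤ 8 * 5 ^ 5 * ∫⁻ x, f x ^ 4 := by
  calc ∫⁻ x, maxFun f x ^ 4 ≤ ∫⁻ x, maxFun (fun y => f y ^ 2) x ^ 2 := by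
        refine lintegral_mono fun x => ?_
        calc maxFun f x ^ 4 = (maxFun f x ^ 2) ^ 2 := by ring
          _ ≤ _ := by gcongr; exact maxFun_sq_le f hfm x
    _ ≤ 8 * 5 ^ 5 * ∫⁻ x, (f x ^ 2) ^ 2 :=
        maxFun_sq _ (by fun_prop) (B ^ 2) (by finiteness) (fun x => by gcongr; exact hf x)
    _ = _ := by simp only [← pow_mul]

/-! ### Powers of the Japanese bracket and Gaussian integrals -/

/-- The function `(1 + |x|²)^{-a}`, a power of the Japanese bracket. -/
noncomputable def jap (a : ℝ) (x : E5) : ℝ := (1 + ‖x‖ ^ 2) ^ (-a)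

lemma jap_pos (a : ℝ) (x : E5) : 0 < jap a x := by unfold jap; positivity

@[fun_prop]
lemma continuous_jap (a : ℝ) : Continuous (jap a) := by
  unfold jap
  exact Continuous.rpow_const (by fun_prop) fun x => Or.inl (by positivity)

@[fun_prop]
lemma measurable_jap (a : ℝ) : Measurable (jap a) := (continuous_jap a).measurable

lemma jap_le_jap {a b : ℝ} (h : b ≤ a) (x : E5) : jap a x ≤ jap b x :=
  Real.rpow_le_rpow_of_exponent_le (by nlinarith [sq_nonneg ‖x‖]) (by linarith)

lemma jap_le_one {a : ℝ} (h : 0 ≤ a) (x : E5) : jap a x ≤ 1 := by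
  simpa [jap] using jap_le_jap h x

lemma integrable_jap {a : ℝ} (ha : 5 / 2 < a) : Integrable (jap a) := by
  have := integrable_rpow_neg_one_add_norm_sq (E := E5) (μ := volume) (r := 2 * a)
    (by simp; linarith)
  refine this.congr (Filter.Eventually.of_forall fun x => ?_)
  simp only [jap]; congr 1; ring

/-- The substitution `z ↦ x - s z` multiplies Lebesgue measure on `ℝ⁵` by `|s|^{-5}`. -/
lemma map_affine (x : E5) (s : ℝ) (hs : s ≠ 0) :
    (volume : Measure E5).map (fun z => x - s • z) = ENNReal.ofReal |(s ^ 5)⁻¹| • volume := by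
  have h1 : (fun z : E5 => x - s • z) = (fun y => x - y) ∘ (fun z => s • z) := rfl
  rw [h1, ← Measure.map_map (by fun_prop) (by fun_prop), Measure.map_addHaar_smul _ hs,
    Measure.map_smul, (Measure.measurePreserving_sub_left volume x).map_eq]
  simp

/-- Averages of `f` against dilates of a radially decreasing integrable function are controlled by
the maximal function: the superlevel sets of `jap (21 / 8)` are balls centred at the origin, so the
layer cake formula reduces the claim to averages over balls. -/
lemma lintegral_jap_mul_le (f : E5 → ℝ≥0∞) (hf : Measurable f) (x : E5) (s : ℝ) (hs : s ≠ 0) :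
    ∫⁻ z, ENNReal.ofReal (jap (21 / 8) z) * f (x - s • z)
      ≤ (∫⁻ z, ENNReal.ofReal (jap (21 / 8) z)) * maxFun f x := by
  have hT : Measurable fun z : E5 => x - s • z := by fun_prop
  have hfT : Measurable fun z : E5 => f (x - s • z) := hf.comp hT
  have hball : ∀ ρ : ℝ, ∫⁻ z in ball (0 : E5) ρ, f (x - s • z)
      ≤ volume (ball (0 : E5) ρ) * maxFun f x := by
    intro ρ
    rcases le_or_gt ρ 0 with h | hρ
    · simp [ball_eq_empty.2 h]
    have hpre : ball (0 : E5) ρ = (fun z : E5 => x - s • z) ⁻¹' ball x (|s| * ρ) := by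
      ext z
      simp [dist_eq_norm, norm_smul, hs]
    rw [hpre, ← setLIntegral_map measurableSet_ball hf hT, ← Measure.map_apply hT measurableSet_ball,
      map_affine x s hs, Measure.restrict_smul, lintegral_smul_measure, Measure.smul_apply,
      smul_eq_mul, smul_eq_mul, mul_assoc]
    gcongr
    exact setLIntegral_ball_le f x x _ (mem_ball_self (by positivity))
  have hlevel : ∀ l ∈ Ioi (0 : ℝ), ∃ ρ : ℝ, {z : E5 | l < jap (21 / 8) z} = ball 0 ρ := by
    intro l hl
    refine ⟨√(l ^ (-(21 / 8 : ℝ))⁻¹ - 1), ?_⟩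
    ext z
    rw [mem_ofPred_eq, mem_ball_zero_iff, Real.lt_sqrt (norm_nonneg _), jap, lt_sub_iff_add_lt',
      Real.lt_rpow_inv_iff_of_neg (by positivity) hl (by norm_num)]
  have h1 := lintegral_eq_lintegral_meas_lt
    (volume.withDensity fun z : E5 => f (x - s • z)) (f := jap (21 / 8))
    (Filter.Eventually.of_forall fun z => (jap_pos _ z).le) (by fun_prop)
  have h2 := lintegral_eq_lintegral_meas_lt (volume : Measure E5) (f := jap (21 / 8))
    (Filter.Eventually.of_forall fun z => (jap_pos _ z).le) (by fun_prop)
  rw [lintegral_withDensity_eq_lintegral_mul _ hfT (by fun_prop)] at h1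
  simp only [Pi.mul_apply] at h1
  simp only [mul_comm _ (f _)]
  rw [h1, h2]
  have h3 : Measurable fun t : ℝ => volume {a : E5 | t < jap (21 / 8) a} := by
    apply Antitone.measurable
    intro s t hst
    exact measure_mono fun a ha => lt_of_le_of_lt hst ha
  rw [← lintegral_mul_const _ h3]
  refine setLIntegral_mono' measurableSet_Ioi fun l hl => ?_
  obtain ⟨ρ, hρ⟩ := hlevel l hl
  rw [hρ, withDensity_apply _ measurableSet_ball]
  exact hball ρ

/-- The convolution of two Gaussians, by completing the square. -/
lemma lintegral_gauss (x : E5) (r s : ℝ) (hr : 0 < r) (hs : 0 < s) :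
    ∫⁻ y, ENNReal.ofReal (Real.exp (-(r * ‖x - y‖ ^ 2 + s * ‖y‖ ^ 2)))
      = ENNReal.ofReal ((Real.pi / (r + s)) ^ (5 / 2 : ℝ) *
          Real.exp (-(r * s / (r + s) * ‖x‖ ^ 2))) := by
  have hrs : 0 < r + s := by positivity
  have hsq : ∀ y : E5, -(r * ‖x - y‖ ^ 2 + s * ‖y‖ ^ 2)
      = -(r + s) * ‖y - (r / (r + s)) • x‖ ^ 2 + -(r * s / (r + s) * ‖x‖ ^ 2) := by
    intro y
    rw [norm_sub_sq_real, norm_sub_sq_real, norm_smul, inner_smul_right, real_inner_comm,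
      Real.norm_of_nonneg (by positivity)]
    field_simp
    ring
  have hI := GaussianFourier.integral_rexp_neg_mul_sq_norm (V := E5) hrs
  have hpos : 0 < (Real.pi / (r + s)) ^ (Module.finrank ℝ E5 / 2 : ℝ) := by positivity
  -- a nonintegrable function would have integral `0`, contradicting the value in `hI`
  have h_int : Integrable (fun v : E5 => Real.exp (-(r + s) * ‖v‖ ^ 2)) := by
    by_contra h
    rw [integral_undef h] at hI
    linarith
  have hL : ∫⁻ v : E5, ENNReal.ofReal (Real.exp (-(r + s) * ‖v‖ ^ 2))
      = ENNReal.ofReal ((Real.pi / (r + s)) ^ (5 / 2 : ℝ)) := by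
    rw [← ofReal_integral_eq_lintegral_ofReal h_int
      (Filter.Eventually.of_forall fun v => (Real.exp_pos _).le), hI]
    simp
  simp_rw [hsq, Real.exp_add, ENNReal.ofReal_mul (Real.exp_pos _).le]
  rw [lintegral_mul_const' _ _ (by simp),
    lintegral_sub_right_eq_self (fun y : E5 => ENNReal.ofReal (Real.exp (-(r + s) * ‖y‖ ^ 2))), hL,
    ← ENNReal.ofReal_mul (by positivity)]

lemma lintegral_gamma (a r : ℝ) (ha : 0 < a) (hr : 0 < r) :
    ∫⁻ t in Ioi (0 : ℝ), ENNReal.ofReal (t ^ (a - 1) * Real.exp (-(r * t)))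
      = ENNReal.ofReal ((1 / r) ^ a * Real.Gamma a) := by
  have hI := Real.integral_rpow_mul_exp_neg_mul_Ioi ha hr
  have hG := Real.Gamma_pos_of_pos ha
  have h_int : IntegrableOn (fun t : ℝ => t ^ (a - 1) * Real.exp (-(r * t))) (Ioi 0) := by
    by_contra h
    rw [integral_undef h] at hI
    have : 0 < (1 / r) ^ a * Real.Gamma a := by positivity
    linarith
  rw [← ofReal_integral_eq_lintegral_ofReal h_int, hI]
  filter_upwards [ae_restrict_mem measurableSet_Ioi] with t ht
  have : 0 < t := ht
  positivity

/-- Interchange of the integrals over the region `0 < u < s`, followed by the shift `s = u + σ`. -/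
lemma lintegral_triangle (H : ℝ → ℝ → ℝ≥0∞) (hH : Measurable (Function.uncurry H)) :
    ∫⁻ s in Ioi (0 : ℝ), ∫⁻ u in Ioo 0 s, H s u
      = ∫⁻ u in Ioi (0 : ℝ), ∫⁻ σ in Ioi (0 : ℝ), H (u + σ) u := by
  set S : Set (ℝ × ℝ) := {p | 0 < p.2 ∧ p.2 < p.1} with hS
  have hSm : MeasurableSet S :=
    (measurableSet_lt measurable_const measurable_snd).inter
      (measurableSet_lt measurable_snd measurable_fst)
  have hm : Measurable (S.indicator (Function.uncurry H)) := hH.indicator hSm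
  calc _ = ∫⁻ s, ∫⁻ u, S.indicator (Function.uncurry H) (s, u) := by
        rw [← lintegral_indicator measurableSet_Ioi]
        congr 1; ext s
        by_cases hs : 0 < s
        · rw [indicator_of_mem (by exact hs), ← lintegral_indicator measurableSet_Ioo]
          rfl
        · rw [indicator_of_notMem (by exact hs), eq_comm]
          have : ∀ u, S.indicator (Function.uncurry H) (s, u) = 0 := by
            intro u
            refine indicator_of_notMem (fun h => hs ?_) _
            exact h.1.trans h.2
          simp [this]
    _ = ∫⁻ u, ∫⁻ s, S.indicator (Function.uncurry H) (s, u) :=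
        lintegral_lintegral_swap hm.aemeasurable
    _ = ∫⁻ u, ∫⁻ σ, S.indicator (Function.uncurry H) (u + σ, u) := by
        congr 1; ext u
        exact (lintegral_add_left_eq_self (fun s => S.indicator (Function.uncurry H) (s, u)) u).symm
    _ = _ := by
        rw [← lintegral_indicator measurableSet_Ioi]
        congr 1; ext u
        by_cases hu : 0 < u
        · rw [indicator_of_mem (by exact hu), ← lintegral_indicator measurableSet_Ioi]
          congr 1; ext σ
          simp [S, indicator, hu, Function.uncurry]
        · rw [indicator_of_notMem (by exact hu)]
          simp [S, indicator, hu]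

/-- The substitution `u = r s / (r + s)`, which maps `(0, ∞)` onto `(0, s)`, in the integral over
the parameter of the Gaussian representing the Riesz kernel. -/
lemma subst_r (s q a : ℝ) (hs : 0 < s) :
    ∫⁻ r in Ioi (0 : ℝ), ENNReal.ofReal (r ^ (11 / 8 : ℝ) * (s ^ (a - 1) * Real.exp (-s)) *
        ((Real.pi / (r + s)) ^ (5 / 2 : ℝ) * Real.exp (-(r * s / (r + s) * q))))
      = ∫⁻ u in Ioo 0 s, ENNReal.ofReal (Real.pi ^ (5 / 2 : ℝ) * u ^ (11 / 8 : ℝ) *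
          s ^ (a - 21 / 8) * (s - u) ^ (-(7 / 8) : ℝ) * Real.exp (-(u * q)) * Real.exp (-s)) := by
  have himg : (fun u : ℝ => u * s / (s - u)) '' Ioo 0 s = Ioi 0 := by
    ext r
    constructor
    · rintro ⟨u, ⟨h0, h1⟩, rfl⟩
      have : 0 < s - u := sub_pos.2 h1
      exact div_pos (mul_pos h0 hs) this
    · intro hr
      have hr : 0 < r := hr
      refine ⟨r * s / (r + s), ⟨by positivity, ?_⟩, ?_⟩
      · rw [div_lt_iff₀ (by positivity)]; nlinarith
      · have : s - r * s / (r + s) = s ^ 2 / (r + s) := by field_simp; ring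
        simp only [this]
        field_simp
  have hder : ∀ u ∈ Ioo 0 s, HasDerivWithinAt (fun u : ℝ => u * s / (s - u))
      (s ^ 2 / (s - u) ^ 2) (Ioo 0 s) u := by
    intro u hu
    have hne : s - u ≠ 0 := (sub_pos.2 hu.2).ne'
    have := (((hasDerivAt_id u).mul_const s).div ((hasDerivAt_id u).const_sub s) hne)
    refine (this.congr_deriv ?_).hasDerivWithinAt
    simp; ring
  have hinj : InjOn (fun u : ℝ => u * s / (s - u)) (Ioo 0 s) := by
    intro u hu w hw h
    have h1 : 0 < s - u := sub_pos.2 hu.2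
    have h2 : 0 < s - w := sub_pos.2 hw.2
    simp only at h
    rw [div_eq_div_iff h1.ne' h2.ne'] at h
    have h3 : s * s * (u - w) = 0 := by linarith
    have h4 : s * s ≠ 0 := by positivity
    linarith [(mul_eq_zero.1 h3).resolve_left h4]
  rw [← himg, lintegral_image_eq_lintegral_abs_deriv_mul measurableSet_Ioo hder hinj]
  refine setLIntegral_congr_fun measurableSet_Ioo fun u hu => ?_
  have hu0 : 0 < u := hu.1
  have hd : 0 < s - u := sub_pos.2 hu.2
  obtain ⟨d, hdd⟩ : ∃ d, d = s - u := ⟨_, rfl⟩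
  rw [← hdd] at hd ⊢
  have e1 : u * s / d + s = s ^ 2 / d := by rw [eq_sub_iff_add_eq] at hdd; field_simp; linarith
  rw [← ENNReal.ofReal_mul (abs_nonneg _), abs_of_pos (by positivity), e1]
  have e2 : u * s / d * s / (s ^ 2 / d) = u := by field_simp
  rw [e2]
  congr 1
  have e3 : (Real.pi / (s ^ 2 / d)) ^ (5 / 2 : ℝ)
      = Real.pi ^ (5 / 2 : ℝ) * d ^ (5 / 2 : ℝ) * s ^ (-5 : ℝ) := by
    rw [show Real.pi / (s ^ 2 / d) = Real.pi * d * s ^ (-2 : ℝ) by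
      rw [Real.rpow_neg hs.le, Real.rpow_two]; field_simp,
      Real.mul_rpow (by positivity) (by positivity), Real.mul_rpow (by positivity) (by positivity),
      ← Real.rpow_mul hs.le]
    norm_num
  have e4 : (u * s / d) ^ (11 / 8 : ℝ) = u ^ (11 / 8 : ℝ) * s ^ (11 / 8 : ℝ) * d ^ (-(11 / 8) : ℝ) := by
    rw [Real.div_rpow (by positivity) (by positivity), Real.mul_rpow (by positivity) (by positivity),
      Real.rpow_neg hd.le]; rfl
  have e5 : s ^ 2 / d ^ 2 = s ^ (2 : ℝ) * d ^ (-2 : ℝ) := by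
    rw [Real.rpow_neg hd.le, Real.rpow_two, Real.rpow_two]; rfl
  have e6 : s ^ (a - 21 / 8) = s ^ (2 : ℝ) * s ^ (11 / 8 : ℝ) * s ^ (a - 1) * s ^ (-5 : ℝ) := by
    rw [← Real.rpow_add hs, ← Real.rpow_add hs, ← Real.rpow_add hs]; congr 1; ring
  have e7 : d ^ (-(7 / 8) : ℝ) = d ^ (-2 : ℝ) * d ^ (-(11 / 8) : ℝ) * d ^ (5 / 2 : ℝ) := by
    rw [← Real.rpow_add hd, ← Real.rpow_add hd]; congr 1; norm_num
  rw [e3, e4, e5, e6, e7]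
  ring

/-! ### Riesz potentials of powers of the Japanese bracket -/

lemma lintegral_swap_three (P : E5 → ℝ → ℝ → ℝ≥0∞)
    (hPm : Measurable fun p : E5 × ℝ × ℝ => P p.1 p.2.1 p.2.2) :
    ∫⁻ y, ∫⁻ s in Ioi (0 : ℝ), ∫⁻ r in Ioi (0 : ℝ), P y s r
      = ∫⁻ s in Ioi (0 : ℝ), ∫⁻ r in Ioi (0 : ℝ), ∫⁻ y, P y s r := by
  rw [lintegral_lintegral_swap]
  · congr 1; ext s
    refine lintegral_lintegral_swap (Measurable.aemeasurable ?_)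
    exact hPm.comp (by fun_prop : Measurable fun p : E5 × ℝ => (p.1, s, p.2))
  · refine Measurable.aemeasurable ?_
    have : Measurable fun p : (E5 × ℝ) × ℝ => P p.1.1 p.1.2 p.2 :=
      hPm.comp (by fun_prop : Measurable fun p : (E5 × ℝ) × ℝ => (p.1.1, p.1.2, p.2))
    exact this.lintegral_prod_right'

/-- The Riesz potential of `(1 + |·|²)^{-a}` as a double integral. The kernel and the density are
both written as Gamma integrals of Gaussians (`lintegral_gamma`), the spatial integral is evaluated
by `lintegral_gauss`, and `subst_r` and `lintegral_triangle` change the remaining variables. The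
exponent `a - 21/8` of `u + σ` is what makes `a = 21/8` and `a = 29/8` computable. -/
lemma riesz_jap (a : ℝ) (ha : 0 < a) (x : E5) :
    ENNReal.ofReal (Real.Gamma (19 / 8) * Real.Gamma a) *
      ∫⁻ y, ENNReal.ofReal (‖x - y‖ ^ (-(19 / 4) : ℝ)) * ENNReal.ofReal (jap a y)
    = ∫⁻ u in Ioi (0 : ℝ), ∫⁻ σ in Ioi (0 : ℝ), ENNReal.ofReal (Real.pi ^ (5 / 2 : ℝ) *
        u ^ (11 / 8 : ℝ) * (u + σ) ^ (a - 21 / 8) * σ ^ (-(7 / 8) : ℝ) *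
          Real.exp (-(u * ‖x‖ ^ 2)) * Real.exp (-(u + σ))) := by
  have hG1 := Real.Gamma_pos_of_pos (show (0 : ℝ) < 19 / 8 by norm_num)
  have hG2 := Real.Gamma_pos_of_pos ha
  set P : E5 → ℝ → ℝ → ℝ≥0∞ := fun y s r =>
    ENNReal.ofReal (r ^ (11 / 8 : ℝ) * Real.exp (-(‖x - y‖ ^ 2 * r))) *
      ENNReal.ofReal (s ^ (a - 1) * Real.exp (-((1 + ‖y‖ ^ 2) * s))) with hP
  have hPm : Measurable fun p : E5 × ℝ × ℝ => P p.1 p.2.1 p.2.2 := by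
    simp only [hP]; fun_prop
  calc _ = ∫⁻ y, ∫⁻ s in Ioi (0 : ℝ), ∫⁻ r in Ioi (0 : ℝ), P y s r := by
        rw [← lintegral_const_mul' _ _ (by simp)]
        refine lintegral_congr_ae ?_
        filter_upwards [compl_mem_ae_iff.2 (measure_singleton x)] with y hy
        have hxy : 0 < ‖x - y‖ := by
          rw [norm_pos_iff, sub_ne_zero]; exact fun h => hy h.symm
        have h1 := lintegral_gamma (19 / 8) (‖x - y‖ ^ 2) (by norm_num) (by positivity)
        have h2 := lintegral_gamma a (1 + ‖y‖ ^ 2) ha (by positivity)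
        rw [show (19 / 8 - 1 : ℝ) = 11 / 8 by norm_num] at h1
        have h3 : ∀ s, ∫⁻ r in Ioi (0 : ℝ), P y s r =
            ENNReal.ofReal ((1 / ‖x - y‖ ^ 2) ^ (19 / 8 : ℝ) * Real.Gamma (19 / 8)) *
            ENNReal.ofReal (s ^ (a - 1) * Real.exp (-((1 + ‖y‖ ^ 2) * s))) := by
          intro s
          simp only [hP]
          rw [lintegral_mul_const' _ _ (by simp), h1]
        simp_rw [h3]
        rw [lintegral_const_mul' _ _ (by simp), h2, ← ENNReal.ofReal_mul (by positivity),
          ← ENNReal.ofReal_mul (by positivity), ← ENNReal.ofReal_mul (by positivity)]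
        congr 1
        have e1 : (1 / ‖x - y‖ ^ 2) ^ (19 / 8 : ℝ) = ‖x - y‖ ^ (-(19 / 4) : ℝ) := by
          rw [one_div, Real.inv_rpow (by positivity), ← Real.rpow_natCast, ← Real.rpow_mul hxy.le,
            Real.rpow_neg hxy.le]
          norm_num
        have e2 : (1 / (1 + ‖y‖ ^ 2)) ^ a = jap a y := by
          rw [one_div, Real.inv_rpow (by positivity), jap, Real.rpow_neg (by positivity)]
        rw [e1, e2]; ring
    _ = ∫⁻ s in Ioi (0 : ℝ), ∫⁻ r in Ioi (0 : ℝ), ∫⁻ y, P y s r := lintegral_swap_three P hPm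
    _ = ∫⁻ s in Ioi (0 : ℝ), ∫⁻ r in Ioi (0 : ℝ), ENNReal.ofReal (r ^ (11 / 8 : ℝ) *
          (s ^ (a - 1) * Real.exp (-s)) * ((Real.pi / (r + s)) ^ (5 / 2 : ℝ) *
            Real.exp (-(r * s / (r + s) * ‖x‖ ^ 2)))) := by
        refine setLIntegral_congr_fun measurableSet_Ioi fun s hs => ?_
        refine setLIntegral_congr_fun measurableSet_Ioi fun r hr => ?_
        have hs : 0 < s := hs
        have hr : 0 < r := hr
        have : ∀ y, P y s r = ENNReal.ofReal (r ^ (11 / 8 : ℝ) * (s ^ (a - 1) * Real.exp (-s))) *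
            ENNReal.ofReal (Real.exp (-(r * ‖x - y‖ ^ 2 + s * ‖y‖ ^ 2))) := by
          intro y
          simp only [hP]
          rw [← ENNReal.ofReal_mul (by positivity), ← ENNReal.ofReal_mul (by positivity)]
          congr 1
          have : Real.exp (-(‖x - y‖ ^ 2 * r)) * Real.exp (-((1 + ‖y‖ ^ 2) * s))
              = Real.exp (-s) * Real.exp (-(r * ‖x - y‖ ^ 2 + s * ‖y‖ ^ 2)) := by
            rw [← Real.exp_add, ← Real.exp_add]; congr 1; ring
          linear_combination r ^ (11 / 8 : ℝ) * s ^ (a - 1) * this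
        simp_rw [this]
        rw [lintegral_const_mul' _ _ (by simp), lintegral_gauss x r s hr hs,
          ← ENNReal.ofReal_mul (by positivity)]
    _ = ∫⁻ s in Ioi (0 : ℝ), ∫⁻ u in Ioo 0 s, ENNReal.ofReal (Real.pi ^ (5 / 2 : ℝ) *
          u ^ (11 / 8 : ℝ) * s ^ (a - 21 / 8) * (s - u) ^ (-(7 / 8) : ℝ) *
            Real.exp (-(u * ‖x‖ ^ 2)) * Real.exp (-s)) :=
        setLIntegral_congr_fun measurableSet_Ioi fun s hs => subst_r s _ a hs
    _ = _ := by
        rw [lintegral_triangle (fun s u => ENNReal.ofReal (Real.pi ^ (5 / 2 : ℝ) *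
          u ^ (11 / 8 : ℝ) * s ^ (a - 21 / 8) * (s - u) ^ (-(7 / 8) : ℝ) *
            Real.exp (-(u * ‖x‖ ^ 2)) * Real.exp (-s)))]
        · simp only [add_sub_cancel_left]
        · simp only [Function.uncurry_def]; fun_prop

lemma gamma_jap (b : ℝ) (hb : 0 < b) (x : E5) :
    ∫⁻ t in Ioi (0 : ℝ), ENNReal.ofReal (t ^ (b - 1) * Real.exp (-((1 + ‖x‖ ^ 2) * t)))
      = ENNReal.ofReal (Real.Gamma b * jap b x) := by
  rw [lintegral_gamma b _ hb (by positivity), one_div, Real.inv_rpow (by positivity), jap,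
    Real.rpow_neg (by positivity), mul_comm]

/-- At the conformal exponent `a = 21/8` the potential of `(1 + |·|²)^{-a}` is a multiple of
`(1 + |·|²)^{-19/8}`. -/
lemma riesz_jap_low (x : E5) :
    ENNReal.ofReal (Real.Gamma (19 / 8) * Real.Gamma (21 / 8)) *
      ∫⁻ y, ENNReal.ofReal (‖x - y‖ ^ (-(19 / 4) : ℝ)) * ENNReal.ofReal (jap (21 / 8) y)
    = ENNReal.ofReal (Real.pi ^ (5 / 2 : ℝ) * Real.Gamma (1 / 8) *
        (Real.Gamma (19 / 8) * jap (19 / 8) x)) := by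
  have hG := Real.Gamma_pos_of_pos (show (0 : ℝ) < 1 / 8 by norm_num)
  rw [riesz_jap _ (by norm_num), ENNReal.ofReal_mul (by positivity), ← gamma_jap _ (by norm_num),
    ← lintegral_const_mul' _ _ (by simp)]
  refine setLIntegral_congr_fun measurableSet_Ioi fun u hu => ?_
  have hu : 0 < u := hu
  have h1 := lintegral_gamma (1 / 8) 1 (by norm_num) one_pos
  rw [← ENNReal.ofReal_mul (by positivity)]
  have : ∀ σ ∈ Ioi (0 : ℝ), ENNReal.ofReal (Real.pi ^ (5 / 2 : ℝ) *
        u ^ (11 / 8 : ℝ) * (u + σ) ^ (21 / 8 - 21 / 8 : ℝ) * σ ^ (-(7 / 8) : ℝ) *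
          Real.exp (-(u * ‖x‖ ^ 2)) * Real.exp (-(u + σ)))
      = ENNReal.ofReal (Real.pi ^ (5 / 2 : ℝ) * (u ^ (11 / 8 : ℝ) *
          Real.exp (-((1 + ‖x‖ ^ 2) * u)))) *
        ENNReal.ofReal (σ ^ (1 / 8 - 1 : ℝ) * Real.exp (-(1 * σ))) := by
    intro σ hσ
    rw [← ENNReal.ofReal_mul (by positivity)]
    congr 1
    have e : Real.exp (-(u * ‖x‖ ^ 2)) * Real.exp (-(u + σ))
        = Real.exp (-((1 + ‖x‖ ^ 2) * u)) * Real.exp (-(1 * σ)) := by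
      rw [← Real.exp_add, ← Real.exp_add]; congr 1; ring
    rw [sub_self, Real.rpow_zero, show (1 / 8 - 1 : ℝ) = -(7 / 8) by norm_num]
    linear_combination Real.pi ^ (5 / 2 : ℝ) * u ^ (11 / 8 : ℝ) * σ ^ (-(7 / 8) : ℝ) * e
  rw [setLIntegral_congr_fun measurableSet_Ioi this, lintegral_const_mul' _ _ (by simp), h1,
    ← ENNReal.ofReal_mul (by positivity)]
  congr 1
  rw [show (19 / 8 - 1 : ℝ) = 11 / 8 by norm_num]
  simp
  ring

/-- For `a = 29/8` the factor `u + σ` splits the double integral in two, one with the exponent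
`27/8` and one with the exponent `19/8`. -/
lemma riesz_jap_high (x : E5) :
    ENNReal.ofReal (Real.Gamma (19 / 8) * Real.Gamma (29 / 8)) *
      ∫⁻ y, ENNReal.ofReal (‖x - y‖ ^ (-(19 / 4) : ℝ)) * ENNReal.ofReal (jap (29 / 8) y)
    = ENNReal.ofReal (Real.pi ^ (5 / 2 : ℝ) * Real.Gamma (1 / 8) *
        (Real.Gamma (27 / 8) * jap (27 / 8) x + 1 / 8 * (Real.Gamma (19 / 8) * jap (19 / 8) x))) := by
  have hG := Real.Gamma_pos_of_pos (show (0 : ℝ) < 1 / 8 by norm_num)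
  have hG3 := Real.Gamma_pos_of_pos (show (0 : ℝ) < 27 / 8 by norm_num)
  have hG4 := Real.Gamma_pos_of_pos (show (0 : ℝ) < 19 / 8 by norm_num)
  have hj1 := jap_pos (27 / 8) x
  have hj2 := jap_pos (19 / 8) x
  have hG9 : Real.Gamma (9 / 8) = 1 / 8 * Real.Gamma (1 / 8) := by
    rw [← Real.Gamma_add_one (by norm_num)]; norm_num
  rw [riesz_jap _ (by norm_num), ENNReal.ofReal_mul (by positivity),
    ENNReal.ofReal_add (by positivity) (by positivity), ENNReal.ofReal_mul (p := 1 / 8) (by positivity),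
    ← gamma_jap _ (by norm_num), ← gamma_jap _ (by norm_num),
    ← lintegral_const_mul' _ _ (by simp), ← lintegral_add_left (by fun_prop),
    ← lintegral_const_mul' _ _ (by simp)]
  refine setLIntegral_congr_fun measurableSet_Ioi fun u hu => ?_
  have hu : 0 < u := hu
  have h1 := lintegral_gamma (1 / 8) 1 (by norm_num) one_pos
  have h2 := lintegral_gamma (9 / 8) 1 (by norm_num) one_pos
  have : ∀ σ ∈ Ioi (0 : ℝ), ENNReal.ofReal (Real.pi ^ (5 / 2 : ℝ) *
        u ^ (11 / 8 : ℝ) * (u + σ) ^ (29 / 8 - 21 / 8 : ℝ) * σ ^ (-(7 / 8) : ℝ) *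
          Real.exp (-(u * ‖x‖ ^ 2)) * Real.exp (-(u + σ)))
      = ENNReal.ofReal (Real.pi ^ (5 / 2 : ℝ) * (u ^ (11 / 8 : ℝ) *
          Real.exp (-((1 + ‖x‖ ^ 2) * u)))) *
        (ENNReal.ofReal u * ENNReal.ofReal (σ ^ (1 / 8 - 1 : ℝ) * Real.exp (-(1 * σ))) +
          ENNReal.ofReal (σ ^ (9 / 8 - 1 : ℝ) * Real.exp (-(1 * σ)))) := by
    intro σ hσ
    have hσ : 0 < σ := hσ
    rw [← ENNReal.ofReal_mul (by positivity), ← ENNReal.ofReal_add (by positivity) (by positivity),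
      ← ENNReal.ofReal_mul (by positivity)]
    congr 1
    have e : Real.exp (-(u * ‖x‖ ^ 2)) * Real.exp (-(u + σ))
        = Real.exp (-((1 + ‖x‖ ^ 2) * u)) * Real.exp (-(1 * σ)) := by
      rw [← Real.exp_add, ← Real.exp_add]; congr 1; ring
    have e2 : σ ^ (9 / 8 - 1 : ℝ) = σ * σ ^ (-(7 / 8) : ℝ) := by
      rw [← Real.rpow_one_add' hσ.le (by norm_num)]; norm_num
    rw [e2, show (29 / 8 - 21 / 8 : ℝ) = 1 by norm_num, Real.rpow_one,
      show (1 / 8 - 1 : ℝ) = -(7 / 8) by norm_num]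
    linear_combination Real.pi ^ (5 / 2 : ℝ) * u ^ (11 / 8 : ℝ) * (u + σ) * σ ^ (-(7 / 8) : ℝ) * e
  rw [setLIntegral_congr_fun measurableSet_Ioi this, lintegral_const_mul' _ _ (by simp),
    lintegral_add_left (by fun_prop), lintegral_const_mul' _ _ (by simp), h1, h2, hG9,
    ← ENNReal.ofReal_mul (by positivity), ← ENNReal.ofReal_mul (by positivity),
    ← ENNReal.ofReal_add (by positivity) (by positivity),
    ← ENNReal.ofReal_add (by positivity) (by positivity),
    ← ENNReal.ofReal_mul (by positivity), ← ENNReal.ofReal_mul (by positivity)]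
  congr 1
  have e2 : u ^ (27 / 8 - 1 : ℝ) = u * u ^ (11 / 8 : ℝ) := by
    rw [← Real.rpow_one_add' hu.le (by norm_num)]; norm_num
  rw [e2, show (19 / 8 - 1 : ℝ) = 11 / 8 by norm_num]
  simp
  ring

/-! ### The density `psi` and Riesz potentials of Schwartz functions -/

lemma exists_riesz_jap_bound : ∃ A : ℝ≥0∞, A ≠ ∞ ∧ ∀ x : E5,
    ∫⁻ y, ENNReal.ofReal (‖x - y‖ ^ (-(19 / 4) : ℝ)) * ENNReal.ofReal (jap (21 / 8) y) ≤ A := by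
  have hG1 := Real.Gamma_pos_of_pos (show (0 : ℝ) < 1 / 8 by norm_num)
  have hG2 := Real.Gamma_pos_of_pos (show (0 : ℝ) < 19 / 8 by norm_num)
  have hG3 := Real.Gamma_pos_of_pos (show (0 : ℝ) < 21 / 8 by norm_num)
  have h0 : ENNReal.ofReal (Real.Gamma (19 / 8) * Real.Gamma (21 / 8)) ≠ 0 := by
    simp only [ne_eq, ENNReal.ofReal_eq_zero, not_le]; positivity
  refine ⟨ENNReal.ofReal (Real.pi ^ (5 / 2 : ℝ) * Real.Gamma (1 / 8) * (Real.Gamma (19 / 8) * 1)) /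
    ENNReal.ofReal (Real.Gamma (19 / 8) * Real.Gamma (21 / 8)),
    (ENNReal.div_lt_top (by simp) h0).ne, fun x => ?_⟩
  rw [ENNReal.le_div_iff_mul_le (Or.inl h0) (Or.inl (by simp)), mul_comm, riesz_jap_low]
  gcongr
  exact jap_le_one (by norm_num) x

lemma integrable_riesz_jap {a : ℝ} (ha : 21 / 8 ≤ a) (x : E5) :
    Integrable fun y => ‖x - y‖ ^ (-(19 / 4) : ℝ) * jap a y := by
  obtain ⟨A, hA, hA'⟩ := exists_riesz_jap_bound
  refine ⟨Measurable.aestronglyMeasurable (by fun_prop), ?_⟩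
  refine lt_of_le_of_lt ?_ hA.lt_top
  refine le_trans (lintegral_mono fun y => ?_) (hA' x)
  have hj := jap_pos a y
  rw [Real.enorm_of_nonneg (by positivity), ENNReal.ofReal_mul (by positivity)]
  gcongr
  exact jap_le_jap ha y

/-- The density whose Riesz potential is a multiple of `jap (27 / 8)`; the coefficients are chosen
so that the `jap (19 / 8)` terms of `riesz_jap_low` and `riesz_jap_high` cancel. -/
noncomputable def psi (y : E5) : ℝ :=
  Real.Gamma (29 / 8) * jap (29 / 8) y - Real.Gamma (21 / 8) / 8 * jap (21 / 8) y

@[fun_prop]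
lemma measurable_psi : Measurable psi := by unfold psi; fun_prop

lemma exists_psi_bound : ∃ B : ℝ, 0 < B ∧ ∀ y, |psi y| ≤ B * jap (21 / 8) y := by
  have hG1 := Real.Gamma_pos_of_pos (show (0 : ℝ) < 29 / 8 by norm_num)
  have hG2 := Real.Gamma_pos_of_pos (show (0 : ℝ) < 21 / 8 by norm_num)
  refine ⟨Real.Gamma (29 / 8) + Real.Gamma (21 / 8) / 8, by positivity, fun y => ?_⟩
  have h1 := jap_pos (29 / 8) y
  have h2 := jap_pos (21 / 8) y
  have h3 : jap (29 / 8) y ≤ jap (21 / 8) y := jap_le_jap (by norm_num) y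
  unfold psi
  rw [abs_le]
  constructor <;> nlinarith [mul_le_mul_of_nonneg_left h3 hG1.le, mul_pos hG1 h1, mul_pos hG2 h2,
    mul_pos hG1 h2]

/-- `jap (27 / 8)` is a positive multiple of the Riesz potential of `psi`. -/
lemma exists_riesz_psi : ∃ c : ℝ, 0 < c ∧ ∀ x : E5,
    ∫ y, ‖x - y‖ ^ (-(19 / 4) : ℝ) * psi y = c * jap (27 / 8) x := by
  have hG1 := Real.Gamma_pos_of_pos (show (0 : ℝ) < 1 / 8 by norm_num)
  have hG2 := Real.Gamma_pos_of_pos (show (0 : ℝ) < 19 / 8 by norm_num)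
  have hG3 := Real.Gamma_pos_of_pos (show (0 : ℝ) < 21 / 8 by norm_num)
  have hG4 := Real.Gamma_pos_of_pos (show (0 : ℝ) < 27 / 8 by norm_num)
  have hG5 := Real.Gamma_pos_of_pos (show (0 : ℝ) < 29 / 8 by norm_num)
  refine ⟨Real.pi ^ (5 / 2 : ℝ) * Real.Gamma (1 / 8) * Real.Gamma (27 / 8) / Real.Gamma (19 / 8),
    by positivity, fun x => ?_⟩
  have h_int1 := integrable_riesz_jap (a := 29 / 8) (by norm_num) x
  have h_int2 := integrable_riesz_jap (a := 21 / 8) (by norm_num) x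
  have hj1 := jap_pos (27 / 8) x
  have hj2 := jap_pos (19 / 8) x
  -- real versions of the two lower-integral identities
  have key : ∀ (a d R : ℝ), 0 < d → 0 ≤ R →
      Integrable (fun y => ‖x - y‖ ^ (-(19 / 4) : ℝ) * jap a y) →
      ENNReal.ofReal d * ∫⁻ y, ENNReal.ofReal (‖x - y‖ ^ (-(19 / 4) : ℝ)) *
        ENNReal.ofReal (jap a y) = ENNReal.ofReal R →
      d * ∫ y, ‖x - y‖ ^ (-(19 / 4) : ℝ) * jap a y = R := by
    intro a d R hd hR h_int h
    have hnn : ∀ y, 0 ≤ ‖x - y‖ ^ (-(19 / 4) : ℝ) * jap a y := fun y =>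
      mul_nonneg (by positivity) (jap_pos a y).le
    simp_rw [← ENNReal.ofReal_mul (Real.rpow_nonneg (norm_nonneg _) _)] at h
    rw [← ofReal_integral_eq_lintegral_ofReal h_int (Filter.Eventually.of_forall hnn),
      ← ENNReal.ofReal_mul hd.le] at h
    exact (ENNReal.ofReal_eq_ofReal_iff (mul_nonneg hd.le (integral_nonneg hnn)) hR).1 h
  have k1 := key _ _ _ (by positivity) (by positivity) h_int1 (riesz_jap_high x)
  have k2 := key _ _ _ (by positivity) (by positivity) h_int2 (riesz_jap_low x)
  have : ∀ y, ‖x - y‖ ^ (-(19 / 4) : ℝ) * psi y =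
      Real.Gamma (29 / 8) * (‖x - y‖ ^ (-(19 / 4) : ℝ) * jap (29 / 8) y) -
      Real.Gamma (21 / 8) / 8 * (‖x - y‖ ^ (-(19 / 4) : ℝ) * jap (21 / 8) y) := by
    intro y; unfold psi; ring
  simp_rw [this]
  rw [integral_sub (h_int1.const_mul _) (h_int2.const_mul _), integral_const_mul, integral_const_mul]
  field_simp
  linear_combination 8 * k1 - k2

lemma schwartz_le_jap (g : 𝓢(E5, ℝ)) : ∃ B : ℝ, 0 ≤ B ∧ ∀ y, |g y| ≤ B * jap (21 / 8) y := by
  have h := fun y => g.one_add_le_sup_seminorm_apply (𝕜 := ℝ) (m := (6, 0)) (k := 6) (n := 0)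
    le_rfl le_rfl y
  simp only [norm_iteratedFDeriv_zero] at h
  set B := (2 : ℝ) ^ 6 * ((Finset.Iic (6, 0)).sup fun m => SchwartzMap.seminorm ℝ m.1 m.2) g
  refine ⟨B, le_trans (by positivity) (h 0), fun y => ?_⟩
  have h1 : jap 3 y ≤ jap (21 / 8) y := jap_le_jap (by norm_num) y
  have h2 : jap 3 y = ((1 + ‖y‖ ^ 2) ^ 3)⁻¹ := by
    rw [jap, Real.rpow_neg (by positivity)]; norm_cast
  have h3 : (1 + ‖y‖ ^ 2) ^ 3 ≤ (1 + ‖y‖) ^ 6 := by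
    rw [show (1 + ‖y‖) ^ 6 = ((1 + ‖y‖) ^ 2) ^ 3 by ring]
    gcongr
    nlinarith [norm_nonneg y]
  have hB : 0 ≤ B := le_trans (by positivity) (h 0)
  calc |g y| ≤ B / (1 + ‖y‖) ^ 6 := by
        rw [le_div_iff₀ (by positivity), mul_comm]; exact h y
    _ ≤ B / (1 + ‖y‖ ^ 2) ^ 3 := by gcongr
    _ = B * jap 3 y := by rw [h2]; rfl
    _ ≤ _ := by gcongr

lemma riesz_schwartz_bounded (g : 𝓢(E5, ℝ)) : ∃ B : ℝ≥0∞, B ≠ ∞ ∧ ∀ x : E5,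
    ‖∫ y, ‖x - y‖ ^ (-(19 / 4) : ℝ) * g y‖ₑ ≤ B := by
  obtain ⟨A, hA, hA'⟩ := exists_riesz_jap_bound
  obtain ⟨B, hB0, hB⟩ := schwartz_le_jap g
  refine ⟨ENNReal.ofReal B * A, by finiteness, fun x => ?_⟩
  refine (enorm_integral_le_lintegral_enorm _).trans ?_
  calc _ ≤ ∫⁻ y, ENNReal.ofReal B * (ENNReal.ofReal (‖x - y‖ ^ (-(19 / 4) : ℝ)) *
        ENNReal.ofReal (jap (21 / 8) y)) := by
        refine lintegral_mono fun y => ?_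
        rw [enorm_mul, Real.enorm_of_nonneg (by positivity), mul_left_comm]
        gcongr
        rw [← ENNReal.ofReal_mul hB0, Real.enorm_eq_ofReal_abs]
        exact ENNReal.ofReal_le_ofReal (hB y)
    _ ≤ _ := by
        rw [lintegral_const_mul' _ _ (by simp)]
        gcongr
        exact hA' x

lemma measurable_riesz (g : 𝓢(E5, ℝ)) :
    Measurable fun x : E5 => ∫ y, ‖x - y‖ ^ (-(19 / 4) : ℝ) * g y := by
  have hg := g.continuous.measurable
  have : StronglyMeasurable fun p : E5 × E5 => ‖p.1 - p.2‖ ^ (-(19 / 4) : ℝ) * g p.2 :=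
    Measurable.stronglyMeasurable (by fun_prop)
  exact this.integral_prod_right'.measurable

/-- Self-adjointness of the Riesz potential, for the pairing of `psi` with a Schwartz function. -/
lemma integral_psi_riesz (c : ℝ) (hc : ∀ x : E5,
    ∫ y, ‖x - y‖ ^ (-(19 / 4) : ℝ) * psi y = c * jap (27 / 8) x) (g : 𝓢(E5, ℝ)) :
    ∫ z, psi z * ∫ y, ‖z - y‖ ^ (-(19 / 4) : ℝ) * g y = c * ∫ y, jap (27 / 8) y * g y := by
  have hg := g.continuous.measurable
  obtain ⟨A, hA, hA'⟩ := exists_riesz_jap_bound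
  obtain ⟨B, hB0, hB⟩ := exists_psi_bound
  have h_int : Integrable (Function.uncurry fun z y : E5 =>
      psi z * (‖z - y‖ ^ (-(19 / 4) : ℝ) * g y)) (volume.prod volume) := by
    have hm : Measurable (Function.uncurry fun z y : E5 =>
        psi z * (‖z - y‖ ^ (-(19 / 4) : ℝ) * g y)) := by
      simp only [Function.uncurry_def]; fun_prop
    refine ⟨hm.aestronglyMeasurable, ?_⟩
    rw [HasFiniteIntegral, lintegral_prod_symm _ hm.enorm.aemeasurable]
    calc _ ≤ ∫⁻ y, ‖g y‖ₑ * (ENNReal.ofReal B * A) := by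
          refine lintegral_mono fun y => ?_
          calc _ ≤ ∫⁻ z, ‖g y‖ₑ * (ENNReal.ofReal B * (ENNReal.ofReal (‖y - z‖ ^ (-(19 / 4) : ℝ)) *
                ENNReal.ofReal (jap (21 / 8) z))) := by
                refine lintegral_mono fun z => ?_
                have hz : ‖psi z‖ₑ ≤ ENNReal.ofReal B * ENNReal.ofReal (jap (21 / 8) z) := by
                  rw [← ENNReal.ofReal_mul hB0.le, Real.enorm_eq_ofReal_abs]
                  exact ENNReal.ofReal_le_ofReal (hB z)
                simp only [Function.uncurry_apply_pair]
                rw [enorm_mul, enorm_mul, Real.enorm_of_nonneg (r := ‖z - y‖ ^ _) (by positivity),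
                  norm_sub_rev z y]
                calc _ ≤ ENNReal.ofReal B * ENNReal.ofReal (jap (21 / 8) z) *
                      (ENNReal.ofReal (‖y - z‖ ^ (-(19 / 4) : ℝ)) * ‖g y‖ₑ) := by gcongr
                  _ = _ := by ring
            _ ≤ _ := by
                rw [lintegral_const_mul' _ _ (by simp), lintegral_const_mul' _ _ (by simp)]
                gcongr
                exact hA' y
      _ < ∞ := by
          rw [lintegral_mul_const' _ _ (by finiteness)]
          exact ENNReal.mul_lt_top g.integrable.2 (by finiteness)
  calc _ = ∫ z, ∫ y, psi z * (‖z - y‖ ^ (-(19 / 4) : ℝ) * g y) := by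
        simp_rw [integral_const_mul]
    _ = ∫ y, ∫ z, psi z * (‖z - y‖ ^ (-(19 / 4) : ℝ) * g y) := integral_integral_swap h_int
    _ = ∫ y, c * (jap (27 / 8) y * g y) := by
        congr 1; ext y
        rw [← mul_assoc, ← hc y, ← integral_mul_const]
        congr 1; ext z
        rw [norm_sub_rev z y]; ring
    _ = _ := integral_const_mul _ _

/-- Scaling of the Riesz potential: `|·|^{-19/4} ∗` has order `-1/4` on `ℝ⁵`. -/
lemma riesz_comp_affine (v : E5 → ℝ) (x z : E5) (t : ℝ) (ht : 0 < t) :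
    ∫ y, ‖z - y‖ ^ (-(19 / 4) : ℝ) * v (x - t • y)
      = t ^ (-(1 / 4) : ℝ) * ∫ y, ‖(x - t • z) - y‖ ^ (-(19 / 4) : ℝ) * v y := by
  set h : E5 → ℝ := fun y => ‖(x - t • z) - y‖ ^ (-(19 / 4) : ℝ) * v y with hh
  have h1 : ∀ y, ‖z - y‖ ^ (-(19 / 4) : ℝ) * v (x - t • y) = t ^ (19 / 4 : ℝ) * h (x - t • y) := by
    intro y
    have e : (x - t • z) - (x - t • y) = -(t • (z - y)) := by rw [smul_sub]; abel
    rw [hh]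
    simp only
    rw [e, norm_neg, norm_smul, Real.norm_of_nonneg ht.le,
      Real.mul_rpow ht.le (norm_nonneg _), ← mul_assoc, ← mul_assoc, ← Real.rpow_add ht]
    norm_num
  simp_rw [h1]
  rw [integral_const_mul, Measure.integral_comp_smul volume (fun y => h (x - y)) t,
    integral_sub_left_eq_self h volume x]
  simp only [finrank_euclideanSpace, Fintype.card_fin, smul_eq_mul]
  rw [abs_of_pos (by positivity), ← mul_assoc]
  congr 1
  rw [← Real.rpow_natCast, ← Real.rpow_neg ht.le, ← Real.rpow_add ht]
  norm_num

/-! ### The pointwise bound -/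

lemma exists_affine (v : 𝓢(E5, ℝ)) (x : E5) (t : ℝ) (ht : 0 < t) :
    ∃ g : 𝓢(E5, ℝ), ∀ z, g z = v (x - t • z) := by
  let e : E5 ≃L[ℝ] E5 := ContinuousLinearEquiv.smulLeft (Units.mk0 (-t) (by linarith))
  refine ⟨compSubConstCLM ℝ (t⁻¹ • x) (compCLMOfContinuousLinearEquiv ℝ e v), fun z => ?_⟩
  have : e (z - t⁻¹ • x) = x - t • z := by
    change (-t) • (z - t⁻¹ • x) = _
    rw [smul_sub, smul_smul]
    have : -t * t⁻¹ = -1 := by field_simp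
    rw [this]; module
  simp [this]

/-- The average of `v` at scale `t` with weight `jap (27 / 8)` is bounded by `t^{-1/4}` times the
maximal function of the Riesz potential of `v`. -/
lemma low_frequency : ∃ C : ℝ≥0∞, C ≠ ∞ ∧ ∀ (v : 𝓢(E5, ℝ)) (x : E5) (t : ℝ), 0 < t →
    ‖∫ z, jap (27 / 8) z * v (x - t • z)‖ₑ ≤ C * ENNReal.ofReal (t ^ (-(1 / 4) : ℝ)) *
      maxFun (fun x => ‖∫ y, ‖x - y‖ ^ (-(19 / 4) : ℝ) * v y‖ₑ) x := by
  obtain ⟨c, hc0, hc⟩ := exists_riesz_psi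
  obtain ⟨B, hB0, hB⟩ := exists_psi_bound
  have hCg : ∫⁻ z, ENNReal.ofReal (jap (21 / 8) z) ≠ ∞ :=
    (integrable_jap (by norm_num)).lintegral_lt_top.ne
  refine ⟨ENNReal.ofReal (B / c) * ∫⁻ z, ENNReal.ofReal (jap (21 / 8) z), by finiteness,
    fun v x t ht => ?_⟩
  obtain ⟨g, hg⟩ := exists_affine v x t ht
  have h := integral_psi_riesz c hc g
  simp_rw [hg, riesz_comp_affine v x _ t ht] at h
  set w : E5 → ℝ := fun x => ∫ y, ‖x - y‖ ^ (-(19 / 4) : ℝ) * v y with hw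
  have h1 : ∫ z, jap (27 / 8) z * v (x - t • z)
      = ∫ z, c⁻¹ * t ^ (-(1 / 4) : ℝ) * (psi z * w (x - t • z)) := by
    rw [eq_comm, integral_const_mul, mul_assoc, ← integral_const_mul]
    simp_rw [mul_left_comm _ (psi _)]
    rw [inv_mul_eq_iff_eq_mul₀ hc0.ne']
    exact h
  rw [h1]
  have hwm : Measurable w := measurable_riesz v
  calc _ ≤ ∫⁻ z, ‖c⁻¹ * t ^ (-(1 / 4) : ℝ) * (psi z * w (x - t • z))‖ₑ :=
        enorm_integral_le_lintegral_enorm _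
    _ ≤ ∫⁻ z, ENNReal.ofReal (B / c) * ENNReal.ofReal (t ^ (-(1 / 4) : ℝ)) *
          (ENNReal.ofReal (jap (21 / 8) z) * ‖w (x - t • z)‖ₑ) := by
        refine lintegral_mono fun z => ?_
        have hz : ‖psi z‖ₑ ≤ ENNReal.ofReal B * ENNReal.ofReal (jap (21 / 8) z) := by
          rw [← ENNReal.ofReal_mul hB0.le, Real.enorm_eq_ofReal_abs]
          exact ENNReal.ofReal_le_ofReal (hB z)
        rw [enorm_mul, enorm_mul, enorm_mul, Real.enorm_of_nonneg (by positivity),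
          Real.enorm_of_nonneg (by positivity),
          show ENNReal.ofReal (B / c) = ENNReal.ofReal B * ENNReal.ofReal c⁻¹ by
            rw [div_eq_mul_inv, ENNReal.ofReal_mul hB0.le]]
        calc _ ≤ ENNReal.ofReal c⁻¹ * ENNReal.ofReal (t ^ (-(1 / 4) : ℝ)) *
              (ENNReal.ofReal B * ENNReal.ofReal (jap (21 / 8) z) * ‖w (x - t • z)‖ₑ) := by gcongr
          _ = _ := by ring
    _ ≤ ENNReal.ofReal (B / c) * ENNReal.ofReal (t ^ (-(1 / 4) : ℝ)) *
          ((∫⁻ z, ENNReal.ofReal (jap (21 / 8) z)) * maxFun (fun x => ‖w x‖ₑ) x) := by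
        rw [lintegral_const_mul' _ _ (by finiteness)]
        gcongr
        exact lintegral_jap_mul_le (fun x => ‖w x‖ₑ) hwm.enorm x t ht.ne'
    _ = _ := by ring

lemma enorm_sub_le_segment (v : 𝓢(E5, ℝ)) (x h : E5) :
    ‖v x - v (x - h)‖ₑ ≤ ∫⁻ θ in Ioc (0 : ℝ) 1, ‖h‖ₑ * ‖fderiv ℝ v (x - θ • h)‖ₑ := by
  have hd : ∀ θ ∈ uIcc (0 : ℝ) 1, HasDerivAt (fun θ : ℝ => v (x - θ • h))
      (fderiv ℝ v (x - θ • h) (-h)) θ := by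
    intro θ _
    have h1 : HasDerivAt (fun θ : ℝ => x - θ • h) (-h) θ := by
      simpa using ((hasDerivAt_id θ).smul_const h).const_sub x
    exact v.differentiableAt.hasFDerivAt.comp_hasDerivAt θ h1
  have hcont : Continuous (fderiv ℝ v) := (v.smooth 1).continuous_fderiv (by simp)
  have hI := intervalIntegral.integral_eq_sub_of_hasDerivAt hd
    (Continuous.intervalIntegrable (by fun_prop) _ _)
  simp only [one_smul, zero_smul, sub_zero] at hI
  rw [← enorm_neg, neg_sub, ← hI, intervalIntegral.integral_of_le zero_le_one]
  refine (enorm_integral_le_lintegral_enorm _).trans (lintegral_mono fun θ => ?_)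
  rw [mul_comm, ← enorm_neg h]
  exact ContinuousLinearMap.le_opENorm _ _

/-- Replacing `v x` by the average of `v` at scale `t` costs at most `t` times the maximal function
of the gradient. The factor `|z|` from the mean value formula is absorbed by passing from the
exponent `27/8` to `21/8`. -/
lemma high_frequency (v : 𝓢(E5, ℝ)) (x : E5) (t : ℝ) (ht : 0 < t) :
    ‖∫ z, jap (27 / 8) z * (v x - v (x - t • z))‖ₑ ≤
      (∫⁻ z, ENNReal.ofReal (jap (21 / 8) z)) * ENNReal.ofReal t *
        maxFun (fun x => ‖fderiv ℝ v x‖ₑ) x := by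
  have hcont : Continuous (fderiv ℝ v) := (v.smooth 1).continuous_fderiv (by simp)
  set f : E5 → ℝ≥0∞ := fun x => ‖fderiv ℝ v x‖ₑ with hf
  have hfm : Measurable f := hcont.enorm.measurable
  calc _ ≤ ∫⁻ z, ‖jap (27 / 8) z * (v x - v (x - t • z))‖ₑ := enorm_integral_le_lintegral_enorm _
    _ ≤ ∫⁻ z, ∫⁻ θ in Ioc (0 : ℝ) 1, ENNReal.ofReal t *
          (ENNReal.ofReal (jap (21 / 8) z) * f (x - (θ * t) • z)) := by
        refine lintegral_mono fun z => ?_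
        have hj : jap (27 / 8) z * ‖z‖ ≤ jap (21 / 8) z := by
          have h1 : ‖z‖ ≤ (1 + ‖z‖ ^ 2) ^ (3 / 4 : ℝ) := by
            calc ‖z‖ = √(‖z‖ ^ 2) := (Real.sqrt_sq (norm_nonneg z)).symm
              _ ≤ √(1 + ‖z‖ ^ 2) := Real.sqrt_le_sqrt (by linarith)
              _ = (1 + ‖z‖ ^ 2) ^ (1 / 2 : ℝ) := Real.sqrt_eq_rpow _
              _ ≤ _ := Real.rpow_le_rpow_of_exponent_le (by nlinarith [sq_nonneg ‖z‖]) (by norm_num)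
          calc jap (27 / 8) z * ‖z‖ ≤ jap (27 / 8) z * (1 + ‖z‖ ^ 2) ^ (3 / 4 : ℝ) := by
                gcongr; exact (jap_pos _ z).le
            _ = _ := by
                rw [jap, jap, ← Real.rpow_add (by positivity)]; norm_num
        rw [enorm_mul, Real.enorm_of_nonneg (jap_pos _ z).le]
        calc _ ≤ ENNReal.ofReal (jap (27 / 8) z) * ∫⁻ θ in Ioc (0 : ℝ) 1,
                ‖t • z‖ₑ * ‖fderiv ℝ v (x - θ • t • z)‖ₑ := by
              gcongr; exact enorm_sub_le_segment v x _
          _ = ∫⁻ θ in Ioc (0 : ℝ) 1, ENNReal.ofReal (jap (27 / 8) z) *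
                (‖t • z‖ₑ * ‖fderiv ℝ v (x - θ • t • z)‖ₑ) :=
              (lintegral_const_mul' _ _ (by simp)).symm
          _ ≤ _ := by
              refine lintegral_mono fun θ => ?_
              simp only [smul_smul, hf]
              rw [enorm_smul, Real.enorm_of_nonneg ht.le, ← ofReal_norm z]
              calc _ = ENNReal.ofReal t * (ENNReal.ofReal (jap (27 / 8) z) * ENNReal.ofReal ‖z‖ *
                      ‖fderiv ℝ v (x - (θ * t) • z)‖ₑ) := by ring
                _ ≤ _ := by
                  rw [← ENNReal.ofReal_mul (jap_pos _ z).le]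
                  gcongr
    _ = ∫⁻ θ in Ioc (0 : ℝ) 1, ∫⁻ z, ENNReal.ofReal t *
          (ENNReal.ofReal (jap (21 / 8) z) * f (x - (θ * t) • z)) := by
        refine lintegral_lintegral_swap (Measurable.aemeasurable ?_)
        simp only [Function.uncurry_def]
        fun_prop
    _ ≤ ∫⁻ θ in Ioc (0 : ℝ) 1, ENNReal.ofReal t *
          ((∫⁻ z, ENNReal.ofReal (jap (21 / 8) z)) * maxFun f x) := by
        refine setLIntegral_mono' measurableSet_Ioc fun θ hθ => ?_
        rw [lintegral_const_mul' _ _ (by simp)]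
        gcongr
        exact lintegral_jap_mul_le f hfm x _ (mul_pos hθ.1 ht).ne'
    _ = _ := by
        simp
        ring

/-- Optimization in `t`: the two terms balance at `t = (b / a)^{4/5}`. To allow `a` or `b` to
vanish, both are first increased by `ε > 0`. -/
lemma optimize (a b V C : ℝ) (ha : 0 ≤ a) (hb : 0 ≤ b)
    (h : ∀ t : ℝ, 0 < t → V ≤ C * (t * a + t ^ (-(1 / 4) : ℝ) * b)) (hC : 0 ≤ C) :
    V ≤ 2 * C * (a ^ (1 / 5 : ℝ) * b ^ (4 / 5 : ℝ)) := by
  have key : ∀ ε : ℝ, 0 < ε → V ≤ 2 * C * ((a + ε) ^ (1 / 5 : ℝ) * (b + ε) ^ (4 / 5 : ℝ)) := by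
    intro ε hε
    have ha' : 0 < a + ε := by positivity
    have hb' : 0 < b + ε := by positivity
    set A := a + ε with hA
    set B := b + ε with hB
    have e1 : (B ^ (4 / 5 : ℝ) * A ^ (-(4 / 5) : ℝ)) * A = A ^ (1 / 5 : ℝ) * B ^ (4 / 5 : ℝ) := by
      rw [mul_assoc, ← Real.rpow_add_one ha'.ne']; norm_num; ring
    have e2 : (B ^ (4 / 5 : ℝ) * A ^ (-(4 / 5) : ℝ)) ^ (-(1 / 4) : ℝ) * B
        = A ^ (1 / 5 : ℝ) * B ^ (4 / 5 : ℝ) := by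
      rw [Real.mul_rpow (by positivity) (by positivity), ← Real.rpow_mul hb'.le,
        ← Real.rpow_mul ha'.le, mul_right_comm, ← Real.rpow_add_one hb'.ne']
      norm_num; ring
    calc V ≤ _ := h (B ^ (4 / 5 : ℝ) * A ^ (-(4 / 5) : ℝ)) (by positivity)
      _ ≤ C * ((B ^ (4 / 5 : ℝ) * A ^ (-(4 / 5) : ℝ)) * A +
            (B ^ (4 / 5 : ℝ) * A ^ (-(4 / 5) : ℝ)) ^ (-(1 / 4) : ℝ) * B) := by
          gcongr <;> linarith
      _ = _ := by rw [e1, e2]; ring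
  have hcont : Continuous fun ε : ℝ =>
      2 * C * ((a + ε) ^ (1 / 5 : ℝ) * (b + ε) ^ (4 / 5 : ℝ)) := by
    have h1 : Continuous fun ε : ℝ => (a + ε) ^ (1 / 5 : ℝ) :=
      Continuous.rpow_const (by fun_prop) fun _ => Or.inr (by norm_num)
    have h2 : Continuous fun ε : ℝ => (b + ε) ^ (4 / 5 : ℝ) :=
      Continuous.rpow_const (by fun_prop) fun _ => Or.inr (by norm_num)
    fun_prop
  have hlim := (hcont.tendsto 0).mono_left (nhdsWithin_le_nhds (s := Ioi 0))
  simp only [add_zero] at hlim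
  refine ge_of_tendsto hlim ?_
  filter_upwards [self_mem_nhdsWithin] with ε hε
  exact key ε hε

/-- The pointwise interpolation bound `|v| ≤ C (M|∇v|)^{1/5} (M w)^{4/5}`, where `w` is the Riesz
potential of `v`. -/
lemma pointwise : ∃ C : ℝ≥0∞, C ≠ ∞ ∧ ∀ (v : 𝓢(E5, ℝ)) (x : E5),
    ‖v x‖ₑ ≤ C * (maxFun (fun x => ‖fderiv ℝ v x‖ₑ) x ^ (1 / 5 : ℝ) *
      maxFun (fun x => ‖∫ y, ‖x - y‖ ^ (-(19 / 4) : ℝ) * v y‖ₑ) x ^ (4 / 5 : ℝ)) := by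
  obtain ⟨C₂, hC₂, hlow⟩ := low_frequency
  have hj := integrable_jap (a := 27 / 8) (by norm_num)
  have hCg : ∫⁻ z, ENNReal.ofReal (jap (21 / 8) z) ≠ ∞ :=
    (integrable_jap (by norm_num)).lintegral_lt_top.ne
  set C₁ := ∫⁻ z, ENNReal.ofReal (jap (21 / 8) z) with hC₁
  set A₀ := ∫ z, jap (27 / 8) z with hA₀
  have hA₀pos : 0 < A₀ := by
    rw [hA₀, integral_pos_iff_support_of_nonneg (fun z => (jap_pos _ z).le) hj]
    have : Function.support (jap (27 / 8)) = univ := by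
      ext z; simp [(jap_pos (27 / 8) z).ne']
    rw [this]; simp
  set D := (C₁.toReal + C₂.toReal) / A₀ with hD
  have hD0 : 0 ≤ D := by positivity
  refine ⟨ENNReal.ofReal (2 * D), ENNReal.ofReal_ne_top, fun v x => ?_⟩
  obtain ⟨B₁, hB₁⟩ : ∃ B : ℝ, ∀ x, ‖fderiv ℝ v x‖ ≤ B := by
    obtain ⟨B, hB⟩ := v.decay 0 1
    refine ⟨B, fun x => ?_⟩
    have := hB.2 x
    rw [pow_zero, one_mul, norm_iteratedFDeriv_one] at this
    exact this
  obtain ⟨B₂, hB₂, hB₂'⟩ := riesz_schwartz_bounded v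
  set M₁ := maxFun (fun x => ‖fderiv ℝ v x‖ₑ) x with hM₁
  set M₂ := maxFun (fun x => ‖∫ y, ‖x - y‖ ^ (-(19 / 4) : ℝ) * v y‖ₑ) x with hM₂
  -- both maximal functions are finite, so the optimization takes place in `ℝ`
  have hM₁t : M₁ ≠ ∞ := by
    refine ne_top_of_le_ne_top (b := ENNReal.ofReal B₁) (by simp) (maxFun_le _ _ (fun y => ?_) x)
    rw [← ofReal_norm]; exact ENNReal.ofReal_le_ofReal (hB₁ y)
  have hM₂t : M₂ ≠ ∞ := ne_top_of_le_ne_top hB₂ (maxFun_le _ _ hB₂' x)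
  have hmain : ∀ t : ℝ, 0 < t →
      |v x| ≤ D * (t * M₁.toReal + t ^ (-(1 / 4) : ℝ) * M₂.toReal) := by
    intro t ht
    obtain ⟨g, hg⟩ := exists_affine v x t ht
    obtain ⟨B, hB⟩ := v.decay 0 0
    have h_int : Integrable fun z => jap (27 / 8) z * v (x - t • z) := by
      refine hj.mul_bdd (c := B) ?_ (Filter.Eventually.of_forall fun z => ?_)
      · have := v.continuous
        exact Continuous.aestronglyMeasurable (by fun_prop)
      · simpa using hB.2 (x - t • z)
    have hsplit : A₀ * v x = (∫ z, jap (27 / 8) z * (v x - v (x - t • z))) +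
        ∫ z, jap (27 / 8) z * v (x - t • z) := by
      simp_rw [mul_sub]
      rw [integral_sub (hj.mul_const _) h_int, integral_mul_const]; ring
    have h1 := high_frequency v x t ht
    have h2 := hlow v x t ht
    rw [← hM₁] at h1
    rw [← hM₂] at h2
    have h1' := ENNReal.toReal_mono (by finiteness) h1
    have h2' := ENNReal.toReal_mono (by finiteness) h2
    simp only [toReal_enorm, ENNReal.toReal_mul, ENNReal.toReal_ofReal ht.le,
      ENNReal.toReal_ofReal (Real.rpow_nonneg ht.le _), Real.norm_eq_abs] at h1' h2'
    rw [← hC₁] at h1'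
    have h3 : A₀ * |v x| ≤ C₁.toReal * t * M₁.toReal +
        C₂.toReal * t ^ (-(1 / 4) : ℝ) * M₂.toReal := by
      have h4 : A₀ * |v x| = |A₀ * v x| := by rw [abs_mul, abs_of_pos hA₀pos]
      rw [h4, hsplit]
      exact (abs_add_le _ _).trans (add_le_add h1' h2')
    rw [hD, div_mul_eq_mul_div, le_div_iff₀ hA₀pos, mul_comm]
    refine h3.trans ?_
    have p1 : 0 ≤ C₂.toReal * (t * M₁.toReal) := by positivity
    have p2 : 0 ≤ C₁.toReal * (t ^ (-(1 / 4) : ℝ) * M₂.toReal) := by positivity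
    nlinarith
  have hfin := optimize _ _ _ _ ENNReal.toReal_nonneg ENNReal.toReal_nonneg hmain hD0
  rw [Real.enorm_eq_ofReal_abs]
  refine (ENNReal.ofReal_le_ofReal hfin).trans_eq ?_
  rw [ENNReal.ofReal_mul (p := 2 * D) (by positivity),
    ENNReal.ofReal_mul (p := M₁.toReal ^ (1 / 5 : ℝ)) (by positivity),
    ENNReal.toReal_rpow, ENNReal.toReal_rpow, ENNReal.ofReal_toReal (by finiteness),
    ENNReal.ofReal_toReal (by finiteness)]

lemma holder (F G : E5 → ℝ≥0∞) (hF : Measurable F) (hG : Measurable G) :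
    (∫⁻ x, (F x ^ (1 / 5 : ℝ) * G x ^ (4 / 5 : ℝ)) ^ (10 / 3 : ℝ)) ^ (3 / 10 : ℝ)
      ≤ (∫⁻ x, F x ^ 2) ^ (1 / 10 : ℝ) * (∫⁻ x, G x ^ 4) ^ (1 / 5 : ℝ) := by
  have hpq : (3 : ℝ).HolderConjugate (3 / 2) := by
    rw [Real.holderConjugate_iff]; norm_num
  have h := ENNReal.lintegral_mul_le_Lp_mul_Lq (volume : Measure E5) hpq
    (f := fun x => F x ^ (2 / 3 : ℝ)) (g := fun x => G x ^ (8 / 3 : ℝ))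
    (by fun_prop) (by fun_prop)
  simp only [Pi.mul_apply, ← ENNReal.rpow_mul] at h
  norm_num at h
  calc _ = (∫⁻ x, F x ^ (2 / 3 : ℝ) * G x ^ (8 / 3 : ℝ)) ^ (3 / 10 : ℝ) := by
        congr 2; ext x
        rw [ENNReal.mul_rpow_of_nonneg _ _ (by norm_num), ← ENNReal.rpow_mul, ← ENNReal.rpow_mul]
        norm_num
    _ ≤ ((∫⁻ x, F x ^ 2) ^ (1 / 3 : ℝ) * (∫⁻ x, G x ^ 4) ^ (2 / 3 : ℝ)) ^ (3 / 10 : ℝ) := by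
        gcongr
    _ = _ := by
        rw [ENNReal.mul_rpow_of_nonneg _ _ (by norm_num), ← ENNReal.rpow_mul, ← ENNReal.rpow_mul]
        norm_num

end RieszInterp

/-! ### The interpolation inequality -/

open RieszInterp

/-- Interpolation estimate on `ℝ⁵`: for every Schwartz function `v`,
`‖v‖_{L^{10/3}} ≤ C ‖∇v‖^{1/5}_{L²} ‖ |·|^{-19/4} ∗ v ‖^{4/5}_{L⁴}`, where the
convolution with `|·|^{-19/4}` realizes (up to a constant) `|∇|^{-1/4} v`. -/
theorem L103_interpolation_riesz_potential :
    ∃ C : ℝ, 0 < C ∧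
      ∀ v : SchwartzMap (EuclideanSpace ℝ (Fin 5)) ℝ,
        eLpNorm (⇑v) (ENNReal.ofReal (10 / 3)) volume
          ≤ ENNReal.ofReal C *
              eLpNorm (fun x => ‖fderiv ℝ (⇑v) x‖) 2 volume ^ ((1 : ℝ) / 5) *
              eLpNorm (fun x => ∫ y, ‖x - y‖ ^ (-(19 / 4) : ℝ) * v y) 4 volume
                ^ ((4 : ℝ) / 5) := by
  obtain ⟨C₀, hC₀, hpt⟩ := pointwise
  set K : ℝ≥0∞ := 8 * 5 ^ 5 with hK
  have hKt : K ≠ ∞ := by rw [hK]; finiteness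
  set C : ℝ≥0∞ := C₀ * (K ^ (1 / 10 : ℝ) * K ^ (1 / 5 : ℝ)) with hC
  have hCt : C ≠ ∞ := by rw [hC]; finiteness
  -- the summand `1` only serves to make the constant positive
  refine ⟨C.toReal + 1, by positivity, fun v => ?_⟩
  have hcont : Continuous (fderiv ℝ v) := (v.smooth 1).continuous_fderiv (by simp)
  set f : E5 → ℝ≥0∞ := fun x => ‖fderiv ℝ v x‖ₑ with hf
  set w : E5 → ℝ := fun x => ∫ y, ‖x - y‖ ^ (-(19 / 4) : ℝ) * v y with hw
  set h : E5 → ℝ≥0∞ := fun x => ‖w x‖ₑ with hh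
  have hfm : Measurable f := hcont.enorm.measurable
  have hhm : Measurable h := (measurable_riesz v).enorm
  obtain ⟨B₂, hB₂, hB₂'⟩ := riesz_schwartz_bounded v
  obtain ⟨B₁, hB₁⟩ : ∃ B : ℝ, ∀ x, f x ≤ ENNReal.ofReal B := by
    obtain ⟨B, hB⟩ := v.decay 0 1
    refine ⟨B, fun x => ?_⟩
    have := hB.2 x
    rw [pow_zero, one_mul, norm_iteratedFDeriv_one] at this
    rw [hf]; simp only
    rw [← ofReal_norm]; exact ENNReal.ofReal_le_ofReal this
  have n1 : eLpNorm (⇑v) (ENNReal.ofReal (10 / 3)) volume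
      = (∫⁻ x, ‖v x‖ₑ ^ (10 / 3 : ℝ)) ^ (3 / 10 : ℝ) := by
    rw [eLpNorm_eq_lintegral_rpow_enorm_toReal (by simp) (by simp),
      ENNReal.toReal_ofReal (by norm_num)]
    norm_num
  have n2 : eLpNorm (fun x => ‖fderiv ℝ (⇑v) x‖) 2 volume ^ ((1 : ℝ) / 5)
      = (∫⁻ x, f x ^ 2) ^ (1 / 10 : ℝ) := by
    rw [eLpNorm_eq_lintegral_rpow_enorm_toReal (by simp) (by simp), ← ENNReal.rpow_mul]
    simp only [enorm_norm, hf]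
    norm_num
  have n3 : eLpNorm w 4 volume ^ ((4 : ℝ) / 5) = (∫⁻ x, h x ^ 4) ^ (1 / 5 : ℝ) := by
    rw [eLpNorm_eq_lintegral_rpow_enorm_toReal (by simp) (by simp), ← ENNReal.rpow_mul]
    simp only [hh]
    norm_num
  rw [n1, n2, n3]
  calc _ ≤ (∫⁻ x, (C₀ * (maxFun f x ^ (1 / 5 : ℝ) * maxFun h x ^ (4 / 5 : ℝ))) ^ (10 / 3 : ℝ))
          ^ (3 / 10 : ℝ) := by
        gcongr with x
        exact hpt v x
    _ = C₀ * (∫⁻ x, (maxFun f x ^ (1 / 5 : ℝ) * maxFun h x ^ (4 / 5 : ℝ)) ^ (10 / 3 : ℝ))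
          ^ (3 / 10 : ℝ) := by
        simp_rw [ENNReal.mul_rpow_of_nonneg C₀ _ (show (0 : ℝ) ≤ 10 / 3 by norm_num)]
        rw [lintegral_const_mul' _ _ (by finiteness),
          ENNReal.mul_rpow_of_nonneg _ _ (by norm_num), ← ENNReal.rpow_mul]
        norm_num
    _ ≤ C₀ * ((∫⁻ x, maxFun f x ^ 2) ^ (1 / 10 : ℝ) * (∫⁻ x, maxFun h x ^ 4) ^ (1 / 5 : ℝ)) := by
        gcongr 1
        exact holder _ _ (measurable_maxFun f) (measurable_maxFun h)
    _ ≤ C₀ * ((K * ∫⁻ x, f x ^ 2) ^ (1 / 10 : ℝ) * (K * ∫⁻ x, h x ^ 4) ^ (1 / 5 : ℝ)) := by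
        gcongr C₀ * (?_ ^ _ * ?_ ^ _)
        · exact maxFun_sq f hfm _ (by simp) hB₁
        · exact maxFun_pow_four h hhm B₂ hB₂ hB₂'
    _ = C * (∫⁻ x, f x ^ 2) ^ (1 / 10 : ℝ) * (∫⁻ x, h x ^ 4) ^ (1 / 5 : ℝ) := by
        rw [ENNReal.mul_rpow_of_nonneg K (∫⁻ x, f x ^ 2) (by norm_num),
          ENNReal.mul_rpow_of_nonneg K (∫⁻ x, h x ^ 4) (by norm_num), hC]
        ring
    _ ≤ _ := by
        gcongr
        rw [← ENNReal.ofReal_toReal hCt]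
        exact ENNReal.ofReal_le_ofReal (by simp)
end
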